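/- Let f: [0,1] → [0,1] be a continuous piecewise linear map with constant slope s > 1. Then the following are equivalent: (1) f has s-limit shadowing; (2) f has shadowing; (3) f has the linking property. -/

import Mathlib

/-!
Throughout, the map is handled through the predicate `PL f s C`: `f` is affine with slope `±s` off a finite
set `C` of turning points (with the endpoints), and is locally symmetric about each interior turning point.
For constant slope `s > 1` the turning points are exactly `Crit f` (`pl_of_constSlope`).

**Shadowing implies linking** (`linking_of_shadowing`).  If a critical point `c` is linked to no critical
point, then for some `ε` no orbit that `ε`-follows the orbit of `c` returns to `C`, so `f` is affine along
such orbits and deviations from the orbit of `c` grow by the factor `s` at every step, always on the folded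
side of the orbit.  A pseudo-orbit that starts along the orbit of `c` and then escapes to the opposite side
cannot be shadowed (`PL.no_unlinked`).

**Linking implies s-limit shadowing** (`slimit_of_linking`).  Linking passes to iterates
(`WeakLinking.iterate`), and s-limit shadowing passes from an iterate back to `f`, so the slope may be
assumed to be at least `8`.  Then one keeps track of the set of current positions of the candidate points.
At scale `θ` this set is `Good` when it is either a full neighbourhood of the pseudo-orbit point or a
one-sided neighbourhood of a nearby turning point.  Away from `C` a full neighbourhood is stretched over
one at the next time.  Near a turning point `y` the image is folded and only one side of the orbit of `y`
remains available; the pseudo-orbit either drifts away from that orbit into the available side, which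
restores a good state, or stays close to it until the time at which the linking orbit, which lies on the
available side, hits a turning point, and there a one-sided neighbourhood of that turning point is available
(`PL.follow`).  The scale may be decreased along the way when the errors tend to zero (`PL.track`), and a
nested intersection of compact sets of candidates yields the shadowing point
(`PL.shadow_of_weakLinking`).
-/

/-- `x` is a `δ`-pseudo-orbit for `f` contained in `A`, and `z ∈ A` `ε`-shadows it. -/
def ShadowingOn {X : Type*} [MetricSpace X] (f : X → X) (A : Set X) : Prop :=
  ∀ ε : ℝ, 0 < ε → ∃ δ : ℝ, 0 < δ ∧
    ∀ x : ℕ → X, (∀ n, x n ∈ A) → (∀ n, dist (f (x n)) (x (n + 1)) < δ) →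
      ∃ z ∈ A, ∀ n, dist (f^[n] z) (x n) < ε

def LimitShadowingOn {X : Type*} [MetricSpace X] (f : X → X) (A : Set X) : Prop :=
  ∀ x : ℕ → X, (∀ n, x n ∈ A) →
    Filter.Tendsto (fun n => dist (f (x n)) (x (n + 1))) Filter.atTop (nhds 0) →
    ∃ z ∈ A, Filter.Tendsto (fun n => dist (f^[n] z) (x n)) Filter.atTop (nhds 0)

def SLimitShadowingOn {X : Type*} [MetricSpace X] (f : X → X) (A : Set X) : Prop :=
  ∀ ε : ℝ, 0 < ε → ∃ δ : ℝ, 0 < δ ∧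
    (∀ x : ℕ → X, (∀ n, x n ∈ A) → (∀ n, dist (f (x n)) (x (n + 1)) < δ) →
      ∃ z ∈ A, ∀ n, dist (f^[n] z) (x n) < ε) ∧
    (∀ x : ℕ → X, (∀ n, x n ∈ A) → (∀ n, dist (f (x n)) (x (n + 1)) < δ) →
      Filter.Tendsto (fun n => dist (f (x n)) (x (n + 1))) Filter.atTop (nhds 0) →
      ∃ z ∈ A, (∀ n, dist (f^[n] z) (x n) < ε) ∧
        Filter.Tendsto (fun n => dist (f^[n] z) (x n)) Filter.atTop (nhds 0))
/-- `f` is piecewise linear on `[0,1]` with constant slope `±s`. -/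
def PiecewiseLinearConstSlope (f : ℝ → ℝ) (s : ℝ) : Prop :=
  ∃ (k : ℕ) (p : Fin (k + 2) → ℝ), StrictMono p ∧ p 0 = 0 ∧ p (Fin.last (k + 1)) = 1 ∧
    ∀ i : Fin (k + 1), ∃ a b : ℝ, |b| = s ∧
      ∀ x ∈ Set.Icc (p i.castSucc) (p i.succ), f x = a + b * x

/-- The critical points of an interval map `f : [0,1] → [0,1]`: the endpoints together
with the points where `f` is not differentiable or has zero derivative. -/
def Crit (f : ℝ → ℝ) : Set ℝ :=
  {x | x ∈ Set.Icc (0 : ℝ) 1 ∧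
    (x = 0 ∨ x = 1 ∨ ¬ DifferentiableAt ℝ f x ∨ deriv f x = 0)}

/-- `x` is `ε`-linked to `y` by `f` (with all relevant points lying in `A`). -/
def EpsLinkedOn (f : ℝ → ℝ) (A : Set ℝ) (ε x y : ℝ) : Prop :=
  ∃ m : ℕ, 1 ≤ m ∧ ∃ z ∈ A, f^[m] z = y ∧ ∀ j ≤ m, |f^[j] x - f^[j] z| ≤ ε

/-- `x` is linked to `y` by `f` (as a map of `A`). -/
def LinkedOn (f : ℝ → ℝ) (A : Set ℝ) (x y : ℝ) : Prop :=
  ∀ ε : ℝ, 0 < ε → EpsLinkedOn f A ε x y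

/-- `f : [0,1] → [0,1]` has the linking property: every critical point is linked to
some critical point. -/
def LinkingProperty (f : ℝ → ℝ) : Prop :=
  ∀ x ∈ Crit f, ∃ y ∈ Crit f, LinkedOn f (Set.Icc (0 : ℝ) 1) x y

/-- `f` is topologically transitive as a map of `A`. -/
def TransitiveOn (f : ℝ → ℝ) (A : Set ℝ) : Prop :=
  ∀ U V : Set ℝ, IsOpen U → IsOpen V → (U ∩ A).Nonempty → (V ∩ A).Nonempty →
    ∃ n : ℕ, ∃ x ∈ U ∩ A, f^[n] x ∈ V ∩ A

/-! ### Piecewise affine maps of constant slope -/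

/-- `f` maps `[0,1]` into itself and is piecewise affine with slopes `±s`; the finite set `C` contains the
endpoints, `f` is affine off `C`, and every interior point of `C` is a genuine turning point
(`f` is locally symmetric about it).  In contrast with `PiecewiseLinearConstSlope`, this form is
stable under composition while keeping track of the turning points. -/
structure PL (f : ℝ → ℝ) (s : ℝ) (C : Set ℝ) : Prop where
  pos : 0 < s
  maps : Set.MapsTo f (Set.Icc (0 : ℝ) 1) (Set.Icc (0 : ℝ) 1)
  fin : C.Finite
  sub : C ⊆ Set.Icc (0 : ℝ) 1
  zero : (0 : ℝ) ∈ C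
  one : (1 : ℝ) ∈ C
  aff : ∀ a b : ℝ, 0 ≤ a → a < b → b ≤ 1 → (∀ x ∈ Set.Ioo a b, x ∉ C) →
    ∃ α β : ℝ, |β| = s ∧ ∀ x ∈ Set.Icc a b, f x = α + β * x
  sym : ∀ c ∈ C, 0 < c → c < 1 → ∃ η : ℝ, 0 < η ∧
    ∀ t : ℝ, 0 ≤ t → t ≤ η → f (c - t) = f (c + t)

/-- A property that is inherited by smaller positive constants and holds with some positive constant
at each point of a finite set holds there with a common constant. -/
lemma fin_min {α : Type*} {S : Set α} (hS : S.Finite) (P : α → ℝ → Prop)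
    (hmono : ∀ x ε ε', 0 < ε' → ε' ≤ ε → P x ε → P x ε')
    (h : ∀ x ∈ S, ∃ ε : ℝ, 0 < ε ∧ P x ε) : ∃ ε : ℝ, 0 < ε ∧ ∀ x ∈ S, P x ε := by
  induction S, hS using Set.Finite.induction_on with
  | empty => exact ⟨1, one_pos, by simp⟩
  | @insert a S _ _ ih =>
    obtain ⟨ε₁, h₁, h₁'⟩ := ih (fun x hx => h x (Set.mem_insert_of_mem _ hx))
    obtain ⟨ε₂, h₂, h₂'⟩ := h a (Set.mem_insert _ _)
    refine ⟨min ε₁ ε₂, lt_min h₁ h₂, ?_⟩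
    rintro x (rfl | hx)
    · exact hmono _ _ _ (lt_min h₁ h₂) (min_le_right _ _) h₂'
    · exact hmono _ _ _ (lt_min h₁ h₂) (min_le_left _ _) (h₁' x hx)

/-- `f` is affine along a segment issuing from `c` in the direction `σ = ±1` whose interior avoids `C`. -/
lemma PL.push {f : ℝ → ℝ} {s : ℝ} {C : Set ℝ} (h : PL f s C) {c σ ℓ : ℝ}
    (hσ : σ = 1 ∨ σ = -1) (hc : c ∈ Set.Icc (0 : ℝ) 1) (hℓ : 0 < ℓ)
    (he : c + σ * ℓ ∈ Set.Icc (0 : ℝ) 1)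
    (hfree : ∀ t, 0 < t → t < ℓ → c + σ * t ∉ C) :
    ∃ σ' : ℝ, (σ' = 1 ∨ σ' = -1) ∧
      ∀ t, 0 ≤ t → t ≤ ℓ → f (c + σ * t) = f c + σ' * (s * t) := by
  have hs := h.pos
  rcases hσ with rfl | rfl
  · obtain ⟨α, β, hβ, hf⟩ := h.aff c (c + ℓ) hc.1 (by linarith) (by simpa using he.2) (by
      intro x hx
      have := hfree (x - c) (by linarith [hx.1]) (by linarith [hx.2])
      simpa using this)
    refine ⟨β / s, ?_, ?_⟩
    · rcases abs_eq hs.le |>.1 hβ with rfl | rfl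
      · left; field_simp
      · right; field_simp
    · intro t h0 h1
      rw [hf _ ⟨by linarith, by linarith⟩, hf c ⟨le_refl _, by linarith⟩]
      field_simp
      ring
  · obtain ⟨α, β, hβ, hf⟩ := h.aff (c - ℓ) c (by linarith [he.1]) (by linarith) hc.2 (by
      intro x hx
      have := hfree (c - x) (by linarith [hx.2]) (by linarith [hx.1])
      simpa using this)
    refine ⟨-β / s, ?_, ?_⟩
    · rcases abs_eq hs.le |>.1 hβ with rfl | rfl
      · right; field_simp
      · left; field_simp
    · intro t h0 h1
      rw [hf _ ⟨by linarith, by linarith⟩, hf c ⟨by linarith, by linarith⟩]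
      field_simp
      ring

lemma PL.lip {f : ℝ → ℝ} {s : ℝ} {C : Set ℝ} (h : PL f s C) {a b : ℝ}
    (ha : a ∈ Set.Icc (0 : ℝ) 1) (hb : b ∈ Set.Icc (0 : ℝ) 1) :
    |f a - f b| ≤ s * |a - b| := by
  -- induction on the number of points of `C` strictly between the two arguments
  have key : ∀ n : ℕ, ∀ a b : ℝ, 0 ≤ a → a ≤ b → b ≤ 1 →
      (C ∩ Set.Ioo a b).ncard = n → |f a - f b| ≤ s * (b - a) := by
    intro n
    induction n using Nat.strong_induction_on with
    | _ n ih =>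
      intro a b ha hab hb hn
      rcases hab.eq_or_lt with rfl | hlt
      · simp
      by_cases hex : ∃ c ∈ C, c ∈ Set.Ioo a b
      · obtain ⟨c, hc, hc1, hc2⟩ := hex
        have hfin : (C ∩ Set.Ioo a b).Finite := h.fin.inter_of_left _
        have e1 : (C ∩ Set.Ioo a c).ncard < n := by
          rw [← hn]
          apply Set.ncard_lt_ncard _ hfin
          refine ⟨fun x hx => ⟨hx.1, hx.2.1, hx.2.2.trans hc2⟩, fun hh => ?_⟩
          exact lt_irrefl _ (hh ⟨hc, hc1, hc2⟩).2.2
        have e2 : (C ∩ Set.Ioo c b).ncard < n := by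
          rw [← hn]
          apply Set.ncard_lt_ncard _ hfin
          refine ⟨fun x hx => ⟨hx.1, hc1.trans hx.2.1, hx.2.2⟩, fun hh => ?_⟩
          exact lt_irrefl _ (hh ⟨hc, hc1, hc2⟩).2.1
        have i1 := ih _ e1 a c ha hc1.le (by linarith) rfl
        have i2 := ih _ e2 c b (by linarith) hc2.le hb rfl
        have := abs_sub_le (f a) (f c) (f b)
        linarith
      · push Not at hex
        obtain ⟨α, β, hβ, hf⟩ := h.aff a b ha hlt hb (fun x hx hxC => hex x hxC hx)
        rw [hf a ⟨le_refl _, hab⟩, hf b ⟨hab, le_refl _⟩]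
        have : α + β * a - (α + β * b) = β * (a - b) := by ring
        rw [this, abs_mul, hβ, abs_sub_comm, abs_of_nonneg (by linarith : (0:ℝ) ≤ b - a)]
  rcases le_total a b with hab | hab
  · rw [abs_sub_comm a b, abs_of_nonneg (by linarith : (0:ℝ) ≤ b - a)]
    exact key _ a b ha.1 hab hb.2 rfl
  · rw [abs_sub_comm (f a), abs_of_nonneg (by linarith : (0:ℝ) ≤ a - b)]
    exact key _ b a hb.1 hab ha.2 rfl

/-- Near a point `y` of `C` the map folds: its values depend only on the distance to `y`. -/
lemma PL.turn {f : ℝ → ℝ} {s : ℝ} {C : Set ℝ} (h : PL f s C) :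
    ∃ r : ℝ, 0 < r ∧ ∀ y ∈ C, ∃ ρ : ℝ, (ρ = 1 ∨ ρ = -1) ∧
      ∀ w ∈ Set.Icc (0 : ℝ) 1, |w - y| ≤ r → f w = f y + ρ * (s * |w - y|) := by
  have hs := h.pos
  apply fin_min h.fin (fun y r => ∃ ρ : ℝ, (ρ = 1 ∨ ρ = -1) ∧
      ∀ w ∈ Set.Icc (0 : ℝ) 1, |w - y| ≤ r → f w = f y + ρ * (s * |w - y|))
  · rintro x ε ε' - hle ⟨ρ, hρ, hf⟩
    exact ⟨ρ, hρ, fun w hw hwx => hf w hw (hwx.trans hle)⟩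
  intro y hy
  have hyI := h.sub hy
  obtain ⟨g, hg, hgap⟩ := fin_min h.fin (fun c ε => c ≠ y → ε < |c - y|)
    (fun c ε ε' _ hle hP hne => hle.trans_lt (hP hne)) (by
      intro c _
      by_cases hcy : c = y
      · exact ⟨1, one_pos, fun hne => absurd hcy hne⟩
      · have : 0 < |c - y| := abs_pos.2 (sub_ne_zero.2 hcy)
        exact ⟨|c - y| / 2, by linarith, fun _ => by linarith⟩)
  have free : ∀ σ : ℝ, (σ = 1 ∨ σ = -1) → ∀ t, 0 < t → t < g → y + σ * t ∉ C := by
    intro σ hσ t ht htg hC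
    have h1 : |y + σ * t - y| = t := by
      rcases hσ with rfl | rfl
      · simp [abs_of_pos ht]
      · simp [abs_of_pos ht]
    have := hgap _ hC (by intro h2; rw [h2] at h1; simp at h1; linarith)
    rw [h1] at this
    linarith
  rcases hyI.1.eq_or_lt with h0 | h0
  · subst h0
    have g1 : g < 1 := by simpa using hgap 1 h.one one_ne_zero
    obtain ⟨ρ, hρ, hf⟩ := h.push (c := 0) (σ := 1) (ℓ := g) (Or.inl rfl) hyI hg
      ⟨by linarith, by linarith⟩ (fun t a b => free 1 (Or.inl rfl) t a b)
    refine ⟨g, hg, ρ, hρ, fun w hw hwg => ?_⟩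
    have := hf |w - 0| (abs_nonneg _) hwg
    rw [← this, sub_zero, abs_of_nonneg hw.1]
    simp
  rcases hyI.2.eq_or_lt with h1 | h1
  · subst h1
    have g1 : g < 1 := by simpa using hgap 0 h.zero zero_ne_one
    obtain ⟨ρ, hρ, hf⟩ := h.push (c := 1) (σ := -1) (ℓ := g) (Or.inr rfl) hyI hg
      ⟨by linarith, by linarith⟩ (fun t a b => free (-1) (Or.inr rfl) t a b)
    refine ⟨g, hg, ρ, hρ, fun w hw hwg => ?_⟩
    have := hf |w - 1| (abs_nonneg _) hwg
    rw [← this, abs_of_nonpos (by linarith [hw.2])]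
    ring_nf
  have g0 : g < y := by
    have := hgap 0 h.zero h0.ne
    rwa [zero_sub, abs_neg, abs_of_pos h0] at this
  have g1 : g < 1 - y := by
    have := hgap 1 h.one h1.ne'
    rwa [abs_of_pos (by linarith)] at this
  obtain ⟨ρ, hρ, hf⟩ := h.push (c := y) (σ := 1) (ℓ := g) (Or.inl rfl) hyI hg
      ⟨by linarith, by linarith⟩ (fun t a b => free 1 (Or.inl rfl) t a b)
  obtain ⟨ρ', hρ', hf'⟩ := h.push (c := y) (σ := -1) (ℓ := g) (Or.inr rfl) hyI hg
      ⟨by linarith, by linarith⟩ (fun t a b => free (-1) (Or.inr rfl) t a b)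
  obtain ⟨η, hη, hsym⟩ := h.sym y hy h0 h1
  have heq : ρ' = ρ := by
    have hm : 0 < min η g := lt_min hη hg
    have e1 := hf (min η g) hm.le (min_le_right _ _)
    have e2 := hf' (min η g) hm.le (min_le_right _ _)
    have e3 := hsym (min η g) hm.le (min_le_left _ _)
    have e4 : y + -1 * min η g = y - min η g := by ring
    rw [e4, e3] at e2
    rw [one_mul, e2] at e1
    have : 0 < s * min η g := by positivity
    have e5 : ρ' * (s * min η g) = ρ * (s * min η g) := by linarith
    exact mul_right_cancel₀ this.ne' e5
  subst heq
  refine ⟨g, hg, ρ', hρ', fun w hw hwg => ?_⟩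
  rcases le_total y w with hyw | hyw
  · have := hf |w - y| (abs_nonneg _) hwg
    rw [← this, abs_of_nonneg (by linarith)]
    ring_nf
  · have := hf' |w - y| (abs_nonneg _) hwg
    rw [← this, abs_of_nonpos (by linarith)]
    ring_nf

/-! ### Constant slope maps and their critical points -/

/-- On an interval containing no break point, a map of constant slope is affine. -/
lemma pl_piece {f : ℝ → ℝ} {s : ℝ} {k : ℕ} {p : Fin (k + 2) → ℝ}
    (h0 : p 0 = 0) (h1 : p (Fin.last (k + 1)) = 1)
    (hpiece : ∀ i : Fin (k + 1), ∃ a b : ℝ, |b| = s ∧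
      ∀ x ∈ Set.Icc (p i.castSucc) (p i.succ), f x = a + b * x)
    (a b : ℝ) (ha : 0 ≤ a) (hab : a < b) (hb : b ≤ 1)
    (hfree : ∀ x ∈ Set.Ioo a b, x ∉ Set.range p) :
    ∃ α β : ℝ, |β| = s ∧ ∀ x ∈ Set.Icc a b, f x = α + β * x := by
  classical
  let S : Finset (Fin (k + 1)) := Finset.univ.filter (fun i => p i.castSucc ≤ a)
  have hS : S.Nonempty := ⟨0, by simp [S, h0, ha]⟩
  have hmem : S.max' hS ∈ S := Finset.max'_mem _ _
  have hle : p (S.max' hS).castSucc ≤ a := by simpa [S] using hmem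
  have hgt : a < p (S.max' hS).succ := by
    by_contra hcon
    push Not at hcon
    have hne : (S.max' hS).succ ≠ Fin.last (k + 1) := by
      intro h
      rw [h, h1] at hcon
      linarith
    obtain ⟨j, hj⟩ := Fin.exists_castSucc_eq.2 hne
    have hjS : j ∈ S := by simp [S, hj, hcon]
    have h2 := S.le_max' j hjS
    have h3 : (j.castSucc : ℕ) = ((S.max' hS).succ : ℕ) := by rw [hj]
    simp only [Fin.val_castSucc, Fin.val_succ] at h3
    have h4 : (j : ℕ) ≤ (S.max' hS : ℕ) := h2
    omega
  have hge : b ≤ p (S.max' hS).succ := by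
    by_contra hcon
    push Not at hcon
    exact hfree _ ⟨hgt, hcon⟩ ⟨_, rfl⟩
  obtain ⟨α, β, hβ, hf⟩ := hpiece (S.max' hS)
  exact ⟨α, β, hβ, fun x hx => hf x ⟨hle.trans hx.1, hx.2.trans hge⟩⟩

lemma finite_free {S : Set ℝ} (hS : S.Finite) (x : ℝ) :
    ∃ r : ℝ, 0 < r ∧ ∀ c ∈ S, c ≠ x → r < |c - x| := by
  apply fin_min hS (fun c r => c ≠ x → r < |c - x|)
    (fun c ε ε' _ hle hP hne => hle.trans_lt (hP hne))
  intro c _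
  by_cases hcy : c = x
  · exact ⟨1, one_pos, fun hne => absurd hcy hne⟩
  · have : 0 < |c - x| := abs_pos.2 (sub_ne_zero.2 hcy)
    exact ⟨|c - x| / 2, by linarith, fun _ => by linarith⟩

lemma affine_hasDerivAt {f : ℝ → ℝ} {α β a b x : ℝ} (hx : x ∈ Set.Ioo a b)
    (hf : ∀ x ∈ Set.Icc a b, f x = α + β * x) : HasDerivAt f β x := by
  have h1 : HasDerivAt (fun x => α + β * x) β x := by
    simpa using ((hasDerivAt_id x).const_mul β).const_add α
  apply h1.congr_of_eventuallyEq
  filter_upwards [Ioo_mem_nhds hx.1 hx.2] with y hy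
  exact hf y ⟨hy.1.le, hy.2.le⟩

lemma affine_glue {f : ℝ → ℝ} {α₁ β₁ α₂ β₂ a q b : ℝ} (haq : a < q) (hqb : q < b)
    (hd : DifferentiableAt ℝ f q)
    (h₁ : ∀ x ∈ Set.Icc a q, f x = α₁ + β₁ * x)
    (h₂ : ∀ x ∈ Set.Icc q b, f x = α₂ + β₂ * x) : β₁ = β₂ := by
  have e₁ : HasDerivWithinAt f β₁ (Set.Icc a q) q := by
    have h1 : HasDerivAt (fun x => α₁ + β₁ * x) β₁ q := by
      simpa using ((hasDerivAt_id q).const_mul β₁).const_add α₁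
    exact h1.hasDerivWithinAt.congr h₁ (h₁ q ⟨haq.le, le_refl _⟩)
  have e₂ : HasDerivWithinAt f β₂ (Set.Icc q b) q := by
    have h1 : HasDerivAt (fun x => α₂ + β₂ * x) β₂ q := by
      simpa using ((hasDerivAt_id q).const_mul β₂).const_add α₂
    exact h1.hasDerivWithinAt.congr h₂ (h₂ q ⟨le_refl _, hqb.le⟩)
  have u₁ := uniqueDiffOn_Icc haq q ⟨haq.le, le_refl _⟩
  have u₂ := uniqueDiffOn_Icc hqb q ⟨le_refl _, hqb.le⟩
  have f₁ := u₁.eq_deriv _ e₁ hd.hasDerivAt.hasDerivWithinAt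
  have f₂ := u₂.eq_deriv _ e₂ hd.hasDerivAt.hasDerivWithinAt
  rw [f₁, f₂]

theorem pl_of_constSlope (f : ℝ → ℝ) (s : ℝ) (hs : 1 < s)
    (hmaps : Set.MapsTo f (Set.Icc (0 : ℝ) 1) (Set.Icc (0 : ℝ) 1))
    (hpl : PiecewiseLinearConstSlope f s) : PL f s (Crit f) := by
  obtain ⟨k, p, -, h0, h1, hpiece⟩ := hpl
  have piece := pl_piece h0 h1 hpiece
  have hfinp : (Set.range p).Finite := Set.finite_range p
  have hne : ∀ β : ℝ, |β| = s → β ≠ 0 := by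
    rintro β hβ rfl
    simp at hβ
    linarith
  -- around an interior point, no other break points
  have near : ∀ x, 0 < x → x < 1 → ∃ r : ℝ, 0 < r ∧ 0 ≤ x - r ∧ x + r ≤ 1 ∧
      ∀ c ∈ Set.range p, c ≠ x → r < |c - x| := by
    intro x hx0 hx1
    obtain ⟨r, hr, hfr⟩ := finite_free hfinp x
    refine ⟨min r (min x (1 - x)), lt_min hr (lt_min hx0 (by linarith)), ?_, ?_, ?_⟩
    · have := (min_le_right r (min x (1 - x))).trans (min_le_left _ _)
      linarith
    · have := (min_le_right r (min x (1 - x))).trans (min_le_right _ _)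
      linarith
    · intro c hc hcx
      exact (min_le_left _ _).trans_lt (hfr c hc hcx)
  have hsub : Crit f ⊆ Set.range p := by
    rintro x ⟨hxI, hx⟩
    by_contra hxp
    have hx0 : 0 < x := lt_of_le_of_ne hxI.1 (by rintro rfl; exact hxp ⟨0, h0⟩)
    have hx1 : x < 1 := lt_of_le_of_ne hxI.2 (by rintro rfl; exact hxp ⟨_, h1⟩)
    obtain ⟨r, hr, hr0, hr1, hfr⟩ := near x hx0 hx1
    obtain ⟨α, β, hβ, hf⟩ := piece (x - r) (x + r) hr0 (by linarith) hr1 (by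
      intro c hc hcp
      have := hfr c hcp (by rintro rfl; exact hxp hcp)
      have h2 : |c - x| < r := abs_lt.2 ⟨by linarith [hc.1], by linarith [hc.2]⟩
      linarith)
    have hd := affine_hasDerivAt (x := x) ⟨by linarith, by linarith⟩ hf
    rcases hx with hx | hx | hx | hx
    · exact hx0.ne' hx
    · exact hx1.ne hx
    · exact hx hd.differentiableAt
    · rw [hd.deriv] at hx
      exact hne β hβ hx
  have hfin : (Crit f).Finite := hfinp.subset hsub
  refine ⟨by linarith, hmaps, hfin, fun x hx => hx.1, ⟨by simp, Or.inl rfl⟩,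
    ⟨by simp, Or.inr (Or.inl rfl)⟩, ?_, ?_⟩
  · -- non-critical break points are removed one at a time
    have key : ∀ n : ℕ, ∀ a b : ℝ, 0 ≤ a → a < b → b ≤ 1 → (∀ x ∈ Set.Ioo a b, x ∉ Crit f) →
        (Set.range p ∩ Set.Ioo a b).ncard = n →
        ∃ α β : ℝ, |β| = s ∧ ∀ x ∈ Set.Icc a b, f x = α + β * x := by
      intro n
      induction n using Nat.strong_induction_on with
      | _ n ih =>
        intro a b ha hab hb hfree hn
        by_cases hex : ∃ c ∈ Set.range p, c ∈ Set.Ioo a b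
        · obtain ⟨c, hc, hc1, hc2⟩ := hex
          have hfin : (Set.range p ∩ Set.Ioo a b).Finite := hfinp.inter_of_left _
          have e1 : (Set.range p ∩ Set.Ioo a c).ncard < n := by
            rw [← hn]
            apply Set.ncard_lt_ncard _ hfin
            refine ⟨fun x hx => ⟨hx.1, hx.2.1, hx.2.2.trans hc2⟩, fun hh => ?_⟩
            exact lt_irrefl _ (hh ⟨hc, hc1, hc2⟩).2.2
          have e2 : (Set.range p ∩ Set.Ioo c b).ncard < n := by
            rw [← hn]
            apply Set.ncard_lt_ncard _ hfin
            refine ⟨fun x hx => ⟨hx.1, hc1.trans hx.2.1, hx.2.2⟩, fun hh => ?_⟩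
            exact lt_irrefl _ (hh ⟨hc, hc1, hc2⟩).2.1
          obtain ⟨α₁, β₁, hβ₁, hf₁⟩ := ih _ e1 a c ha hc1 (by linarith)
            (fun x hx => hfree x ⟨hx.1, hx.2.trans hc2⟩) rfl
          obtain ⟨α₂, β₂, hβ₂, hf₂⟩ := ih _ e2 c b (by linarith) hc2 hb
            (fun x hx => hfree x ⟨hc1.trans hx.1, hx.2⟩) rfl
          have hd : DifferentiableAt ℝ f c := by
            by_contra hd
            exact hfree c ⟨hc1, hc2⟩ ⟨⟨by linarith, by linarith⟩, Or.inr (Or.inr (Or.inl hd))⟩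
          have hββ := affine_glue hc1 hc2 hd hf₁ hf₂
          subst hββ
          have hαα : α₁ = α₂ := by
            have g1 := hf₁ c ⟨hc1.le, le_refl _⟩
            have g2 := hf₂ c ⟨le_refl _, hc2.le⟩
            linarith
          subst hαα
          refine ⟨α₁, β₁, hβ₁, fun x hx => ?_⟩
          rcases le_total x c with hxc | hxc
          · exact hf₁ x ⟨hx.1, hxc⟩
          · exact hf₂ x ⟨hxc, hx.2⟩
        · push Not at hex
          exact piece a b ha hab hb (fun x hx hxC => hex x hxC hx)
    exact fun a b ha hab hb hfree => key _ a b ha hab hb hfree rfl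
  · intro c hc hc0 hc1
    obtain ⟨r, hr, hr0, hr1, hfr⟩ := near c hc0 hc1
    obtain ⟨α₁, β₁, hβ₁, hf₁⟩ := piece (c - r) c hr0 (by linarith) hc1.le (by
      intro x hx hxp
      have := hfr x hxp (by rintro rfl; exact lt_irrefl _ hx.2)
      have h2 : |x - c| < r := abs_lt.2 ⟨by linarith [hx.1], by linarith [hx.2]⟩
      linarith)
    obtain ⟨α₂, β₂, hβ₂, hf₂⟩ := piece c (c + r) hc0.le (by linarith) hr1 (by
      intro x hx hxp
      have := hfr x hxp (by rintro rfl; exact lt_irrefl _ hx.1)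
      have h2 : |x - c| < r := abs_lt.2 ⟨by linarith [hx.1], by linarith [hx.2]⟩
      linarith)
    have g1 := hf₁ c ⟨by linarith, le_refl _⟩
    have g2 := hf₂ c ⟨le_refl _, by linarith⟩
    have hneg : β₂ = -β₁ := by
      rcases abs_eq_abs.1 (hβ₁.trans hβ₂.symm) with hb | hb
      · -- equal slopes would make `f` differentiable at `c` with nonzero derivative
        exfalso
        subst hb
        have hαα : α₁ = α₂ := by linarith
        subst hαα
        have hd := affine_hasDerivAt (f := f) (α := α₁) (β := β₁) (x := c) (a := c - r)
          (b := c + r) ⟨by linarith, by linarith⟩ (by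
            intro x hx
            rcases le_total x c with hxc | hxc
            · exact hf₁ x ⟨hx.1, hxc⟩
            · exact hf₂ x ⟨hxc, hx.2⟩)
        rcases hc.2 with hx | hx | hx | hx
        · exact hc0.ne' hx
        · exact hc1.ne hx
        · exact hx hd.differentiableAt
        · rw [hd.deriv] at hx
          exact hne β₁ hβ₁ hx
      · linarith
    refine ⟨r, hr, fun t ht0 htr => ?_⟩
    rw [hf₁ (c - t) ⟨by linarith, by linarith⟩, hf₂ (c + t) ⟨by linarith, by linarith⟩, hneg]
    rw [hneg] at g2
    linarith

/-! ### Shadowing implies linking -/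

lemma dep_seq {α : Type*} {P : ℕ → α → Prop} {R : ℕ → α → α → Prop} (h0 : ∃ a, P 0 a)
    (hst : ∀ n a, P n a → ∃ b, P (n + 1) b ∧ R n a b) :
    ∃ u : ℕ → α, (∀ n, P n (u n)) ∧ ∀ n, R n (u n) (u (n + 1)) := by
  obtain ⟨a, ha⟩ := h0
  choose g hg1 hg2 using hst
  let v : (n : ℕ) → {a // P n a} := fun n =>
    Nat.rec (motive := fun n => {a // P n a}) ⟨a, ha⟩ (fun n b => ⟨g n b.1 b.2, hg1 n b.1 b.2⟩) n
  exact ⟨fun n => (v n).1, fun n => (v n).2, fun n => hg2 n (v n).1 (v n).2⟩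

lemma first_growth {s w e : ℝ} (hs : 1 < s) (hw : 0 < w) :
    ∃ K : ℕ, e ≤ s ^ K * w ∧ ∀ i < K, s ^ i * w < e := by
  classical
  have hex : ∃ K : ℕ, e ≤ s ^ K * w := by
    obtain ⟨K, hK⟩ := pow_unbounded_of_one_lt (e / w) hs
    exact ⟨K, by rw [div_lt_iff₀ hw] at hK; exact hK.le⟩
  exact ⟨Nat.find hex, Nat.find_spec hex, fun i hi => not_le.1 (Nat.find_min hex hi)⟩

lemma PL.iter_mem {f : ℝ → ℝ} {s : ℝ} {C : Set ℝ} (h : PL f s C) (n : ℕ) {x : ℝ}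
    (hx : x ∈ Set.Icc (0 : ℝ) 1) : f^[n] x ∈ Set.Icc (0 : ℝ) 1 :=
  (h.maps.iterate n) hx

lemma abs_sign_mul {σ t : ℝ} (hσ : σ = 1 ∨ σ = -1) : |σ * t| = |t| := by
  rcases hσ with rfl | rfl <;> simp

/-- A map with shadowing has no unlinked point of `C`.  If `c` is `ε`-unlinked, there are directions
`σ n` such that the segment of length `ε` from `f^[n+1] c` in direction `σ n` avoids `C` and consists of
points whose orbits follow the orbit of `c`.  Hence a shadowing orbit of a pseudo-orbit starting at `c`
can only leave the orbit of `c` in the direction `σ`, and a pseudo-orbit escaping in the opposite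
direction is not shadowed.  If `C` stays away from the orbit of `c` on the opposite side, a single
jump at time one escapes; otherwise that orbit visits some `y ∈ C` at arbitrarily small distances
on that side, and a jump from one visit to a closer one escapes. -/
theorem PL.no_unlinked {f : ℝ → ℝ} {s : ℝ} {C : Set ℝ} (h : PL f s C) (hs : 1 < s)
    (hsh : ShadowingOn f (Set.Icc (0 : ℝ) 1)) {c : ℝ} (hc : c ∈ C) {ε₀ : ℝ} (hε₀ : 0 < ε₀)
    (hun₀ : ∀ m : ℕ, 1 ≤ m → ∀ z ∈ Set.Icc (0 : ℝ) 1,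
      (∀ j ≤ m, |f^[j] c - f^[j] z| ≤ ε₀) → f^[m] z ∉ C) : False := by
  have hcI := h.sub hc
  obtain ⟨r₀, hr₀, hturn₀⟩ := h.turn
  obtain ⟨r, hr, hr1, hturn⟩ : ∃ r : ℝ, 0 < r ∧ r ≤ 1 / 2 ∧ ∀ y ∈ C, ∃ ρ : ℝ, (ρ = 1 ∨ ρ = -1) ∧
      ∀ w ∈ Set.Icc (0 : ℝ) 1, |w - y| ≤ r → f w = f y + ρ * (s * |w - y|) := by
    refine ⟨min r₀ (1 / 2), lt_min hr₀ (by norm_num), min_le_right _ _, fun y hy => ?_⟩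
    obtain ⟨ρ, hρ, hf⟩ := hturn₀ y hy
    exact ⟨ρ, hρ, fun w hw hwy => hf w hw (hwy.trans (min_le_left _ _))⟩
  obtain ⟨ε, hε, hεr, hun⟩ : ∃ ε : ℝ, 0 < ε ∧ ε ≤ r ∧ ∀ m : ℕ, 1 ≤ m → ∀ z ∈ Set.Icc (0 : ℝ) 1,
      (∀ j ≤ m, |f^[j] c - f^[j] z| ≤ ε) → f^[m] z ∉ C :=
    ⟨min ε₀ r, lt_min hε₀ hr, min_le_right _ _, fun m hm z hz hj =>
      hun₀ m hm z hz (fun j hjm => (hj j hjm).trans (min_le_left _ _))⟩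
  obtain ⟨ρ, hρ, hfρ⟩ := hturn c hc
  have hs0 : 0 < s := h.pos
  -- `T n w`: the point `w` is reached at time `n` by an orbit `ε`-following that of `c`
  let T : ℕ → ℝ → Prop := fun n w =>
    ∃ z ∈ Set.Icc (0 : ℝ) 1, (∀ j ≤ n, |f^[j] c - f^[j] z| ≤ ε) ∧ f^[n] z = w
  have hTI : ∀ n w, T n w → w ∈ Set.Icc (0 : ℝ) 1 := by
    rintro n w ⟨z, hz, -, rfl⟩
    exact h.iter_mem n hz
  have hTC : ∀ n w, T (n + 1) w → w ∉ C := by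
    rintro n w ⟨z, hz, hj, rfl⟩
    exact hun (n + 1) (by omega) z hz hj
  have hTstep : ∀ n w, T n w → |f^[n + 1] c - f w| ≤ ε → T (n + 1) (f w) := by
    rintro n w ⟨z, hz, hj, rfl⟩ hle
    refine ⟨z, hz, fun j hjn => ?_, Function.iterate_succ_apply' f n z⟩
    rcases Nat.lt_or_ge n j with hlt | hge
    · have : j = n + 1 := by omega
      subst this
      rwa [Function.iterate_succ_apply' f n z]
    · exact hj j hge
  obtain ⟨σ, hP, hpush⟩ := dep_seq (α := ℝ)
    (P := fun n σ => ((σ = 1 ∨ σ = -1) ∧ ∀ t, 0 ≤ t → t ≤ ε → T (n + 1) (f^[n + 1] c + σ * t)) ∧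
      (n = 0 → σ = ρ))
    (R := fun n σ σ' => ∀ t, 0 ≤ t → t ≤ ε →
      f (f^[n + 1] c + σ * t) = f^[n + 2] c + σ' * (s * t)) (by
    refine ⟨ρ, ⟨hρ, fun t ht0 htε => ?_⟩, fun _ => rfl⟩
    obtain ⟨e, he, heI⟩ : ∃ e : ℝ, (e = 1 ∨ e = -1) ∧ c + e * (t / s) ∈ Set.Icc (0 : ℝ) 1 := by
      have h1 : t / s ≤ 1 / 2 := by
        rw [div_le_iff₀ hs0]; nlinarith
      have h2 : 0 ≤ t / s := by positivity
      rcases le_total c (1 / 2) with hc2 | hc2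
      · exact ⟨1, Or.inl rfl, by linarith [hcI.1], by linarith⟩
      · exact ⟨-1, Or.inr rfl, by linarith, by linarith [hcI.2]⟩
    have h3 : t / s ≤ t := div_le_self ht0 hs.le
    have habs : |c + e * (t / s) - c| = t / s := by
      rw [add_sub_cancel_left, abs_sign_mul he, abs_of_nonneg (by positivity)]
    have hval : f (c + e * (t / s)) = f c + ρ * t := by
      rw [hfρ _ heI (by rw [habs]; linarith), habs]
      field_simp
    have hT0 : T 0 (c + e * (t / s)) := by
      refine ⟨_, heI, fun j hj => ?_, rfl⟩
      have : j = 0 := by omega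
      subst this
      simp only [Function.iterate_zero, id]
      rw [abs_sub_comm, habs]; linarith
    have := hTstep 0 _ hT0 (by
      rw [hval]
      simp only [zero_add, Function.iterate_one]
      rw [sub_add_cancel_left, abs_neg, abs_sign_mul hρ, abs_of_nonneg ht0]; exact htε)
    rw [hval] at this
    simpa using this) (by
    rintro n σ ⟨⟨hσ, hT⟩, -⟩
    obtain ⟨σ', hσ', hf⟩ := h.push hσ (h.iter_mem (n + 1) hcI) hε (hTI _ _ (hT ε hε.le le_rfl))
      (fun t h1 h2 => hTC _ _ (hT t h1.le h2.le))
    rw [← Function.iterate_succ_apply' f (n + 1) c] at hf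
    refine ⟨σ', ⟨⟨hσ', fun t ht0 htε => ?_⟩, by omega⟩, hf⟩
    have h3 : t / s ≤ t := div_le_self ht0 hs.le
    have h4 : 0 ≤ t / s := by positivity
    have hval := hf (t / s) h4 (by linarith)
    have h5 : s * (t / s) = t := by field_simp
    rw [h5] at hval
    have := hTstep (n + 1) _ (hT (t / s) h4 (by linarith)) (by
      rw [hval, sub_add_cancel_left, abs_neg, abs_sign_mul hσ', abs_of_nonneg ht0]; exact htε)
    rwa [hval] at this)
  have hσ : ∀ n, σ n = 1 ∨ σ n = -1 := fun n => (hP n).1.1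
  have hσ0 : σ 0 = ρ := (hP 0).2 rfl
  obtain ⟨d, hd⟩ : ∃ d : ℕ → ℝ, d = fun n => f^[n + 1] c := ⟨_, rfl⟩
  have hdI : ∀ n, d n ∈ Set.Icc (0 : ℝ) 1 := fun n => by rw [hd]; exact h.iter_mem _ hcI
  have hdf : ∀ n, f (d n) = d (n + 1) := fun n => by
    rw [hd]; exact (Function.iterate_succ_apply' f (n + 1) c).symm
  have hin : ∀ n t, 0 ≤ t → t ≤ ε →
      d n + σ n * t ∈ Set.Icc (0 : ℝ) 1 ∧ d n + σ n * t ∉ C := by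
    intro n t h0 h1
    have := (hP n).1.2 t h0 h1
    rw [hd]
    exact ⟨hTI _ _ this, hTC _ _ this⟩
  have hpush' : ∀ n t, 0 ≤ t → t ≤ ε → f (d n + σ n * t) = d (n + 1) + σ (n + 1) * (s * t) := by
    intro n t h0 h1
    rw [hd]
    exact hpush n t h0 h1
  clear hpush hP
  have hdirs : ∀ n ρ' v, 0 < v → d n + σ n * v = d n + ρ' * v → σ n = ρ' := by
    intro n ρ' v hv heq
    exact mul_right_cancel₀ hv.ne' (add_left_cancel heq)
  -- a pseudo-orbit leaving the orbit of `c` against the directions `σ` is not shadowed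
  have esc : ∀ ε' : ℝ, 0 < ε' → ε' ≤ ε → (∀ δ : ℝ, 0 < δ → ∃ x : ℕ → ℝ,
      (∀ n, x n ∈ Set.Icc (0 : ℝ) 1) ∧ (∀ n, dist (f (x n)) (x (n + 1)) < δ) ∧ x 0 = c ∧
      ∃ N : ℕ, ∃ w : ℕ → ℝ, (∀ n ≤ N, 0 ≤ w n ∧ x (n + 1) = d n - σ n * w n) ∧ ε' ≤ w N) →
      False := by
    intro ε' hε' hε'ε hesc
    obtain ⟨δ, hδ, hshδ⟩ := hsh ε' hε'
    obtain ⟨x, hxI, hxerr, hx0, N, w, hw, hwN⟩ := hesc δ hδ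
    obtain ⟨z, hz, hzx⟩ := hshδ x hxI hxerr
    have hb : ∀ n ≤ N, ∃ b : ℝ, 0 ≤ b ∧ b + w n < ε' ∧ f^[n + 1] z = d n + σ n * b := by
      have aux : ∀ n ≤ N, ∀ b, 0 ≤ b → f^[n + 1] z = d n + σ n * b → b + w n < ε' := by
        intro n hn b hb heq
        have h1 := hzx (n + 1)
        obtain ⟨h2, h3⟩ := hw n hn
        rw [heq, h3, Real.dist_eq] at h1
        have h4 : d n + σ n * b - (d n - σ n * w n) = σ n * (b + w n) := by ring
        rwa [h4, abs_sign_mul (hσ n), abs_of_nonneg (by linarith)] at h1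
      intro n
      induction n with
      | zero =>
        intro hn
        have h1 : |z - c| < ε' := by
          have := hzx 0
          rwa [hx0, Real.dist_eq] at this
        have h2 := hfρ z hz (by linarith)
        have h3 : f^[0 + 1] z = d 0 + σ 0 * (s * |z - c|) := by
          rw [hσ0, hd]; simpa using h2
        exact ⟨_, by positivity, aux 0 hn _ (by positivity) h3, h3⟩
      | succ n ih =>
        intro hn
        obtain ⟨b, hb0, hb1, hb2⟩ := ih (by omega)
        have h2 := (hw n (by omega)).1
        have h3 : f^[n + 1 + 1] z = d (n + 1) + σ (n + 1) * (s * b) := by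
          rw [Function.iterate_succ_apply', hb2]
          exact hpush' n b hb0 (by linarith)
        exact ⟨_, by positivity, aux (n + 1) hn _ (by positivity) h3, h3⟩
    obtain ⟨b, hb0, hb1, -⟩ := hb N le_rfl
    linarith
  by_cases hB : ∃ y ∈ C, ∀ κ : ℝ, 0 < κ → ∃ n : ℕ, ∃ t : ℝ, 0 < t ∧ t ≤ κ ∧ y = d n - σ n * t
  · -- the orbit of `c` accumulates at `y` from the side where escape is wanted
    obtain ⟨y, hy, hacc⟩ := hB
    obtain ⟨ρ', hρ', hfρ'⟩ := hturn y hy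
    have near : ∀ n t, 0 < t → t ≤ r / 2 → y = d n - σ n * t →
        d (n + 1) = f y + ρ' * (s * t) ∧ σ (n + 1) = ρ' := by
      intro n t ht htr hyt
      have e1 : |d n - y| = t := by
        rw [hyt, sub_sub_cancel, abs_sign_mul (hσ n), abs_of_pos ht]
      have e2 := hfρ' (d n) (hdI n) (by rw [e1]; linarith)
      rw [hdf, e1] at e2
      have e3 : |d n + σ n * (ε / 2) - y| = t + ε / 2 := by
        rw [hyt]
        have : d n + σ n * (ε / 2) - (d n - σ n * t) = σ n * (t + ε / 2) := by ring
        rw [this, abs_sign_mul (hσ n), abs_of_pos (by linarith)]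
      have e4 := hfρ' _ (hin n (ε / 2) (by linarith) (by linarith)).1 (by rw [e3]; linarith)
      rw [hpush' n (ε / 2) (by linarith) (by linarith), e3] at e4
      refine ⟨e2, hdirs (n + 1) ρ' (s * (ε / 2)) (by positivity) ?_⟩
      rw [e4, e2]; ring
    apply esc (ε / 2) (by linarith) (by linarith)
    intro δ hδ
    obtain ⟨n, t, ht, htκ, hyt⟩ := hacc (min (δ / (2 * s)) (r / 2))
      (lt_min (by positivity) (by linarith))
    have htr := htκ.trans (min_le_right _ _)
    have htδ : s * t < δ := by
      have h1 := htκ.trans (min_le_left _ _)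
      rw [le_div_iff₀ (by positivity)] at h1
      have : 0 < s * t := by positivity
      linarith
    obtain ⟨n', t', ht', htκ', hyt'⟩ := hacc (t / 2) (by linarith)
    obtain ⟨hd1, hσ1⟩ := near n t ht htr hyt
    obtain ⟨hd1', hσ1'⟩ := near n' t' ht' (by linarith) hyt'
    obtain ⟨w₀, hw₀⟩ : ∃ w₀, w₀ = s * (t - t') := ⟨_, rfl⟩
    have hw₀pos : 0 < w₀ := by rw [hw₀]; apply mul_pos hs0; linarith
    have hw₀δ : w₀ < δ := by
      have : 0 < s * t' := by positivity
      rw [hw₀]; linarith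
    obtain ⟨K, hK, hKi⟩ := first_growth (e := ε / 2) hs hw₀pos
    have track : ∀ k ≤ K, d (n + 1 + k) = d (n' + 1 + k) + σ (n' + 1 + k) * (s ^ k * w₀) ∧
        σ (n + 1 + k) = σ (n' + 1 + k) := by
      intro k
      induction k with
      | zero =>
        intro _
        refine ⟨?_, by rw [add_zero, add_zero, hσ1, hσ1']⟩
        simp only [add_zero, pow_zero, one_mul]
        rw [hd1, hd1', hσ1', hw₀]; ring
      | succ k ih =>
        intro hk
        obtain ⟨i1, i2⟩ := ih (by omega)
        have hlt := hKi k (by omega)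
        have hwk : 0 < s ^ k * w₀ := by positivity
        have e1 := hpush' (n' + 1 + k) (s ^ k * w₀) hwk.le (by linarith)
        rw [← i1, hdf] at e1
        have e2 := hpush' (n' + 1 + k) (s ^ k * w₀ + ε / 2) (by linarith) (by linarith)
        have e3 := hpush' (n + 1 + k) (ε / 2) (by linarith) (by linarith)
        have e4 : d (n + 1 + k) + σ (n + 1 + k) * (ε / 2) =
            d (n' + 1 + k) + σ (n' + 1 + k) * (s ^ k * w₀ + ε / 2) := by
          rw [i1, i2]; ring
        rw [e4, e2] at e3
        constructor
        · rw [← add_assoc, ← add_assoc, e1, pow_succ]; ring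
        · apply hdirs (n + 1 + (k + 1)) _ (s * (ε / 2)) (by positivity)
          rw [← add_assoc, ← add_assoc, ← e3, e1]; ring
    refine ⟨fun i => if i ≤ n + 1 then f^[i] c else f^[i - n + n'] c, ?_, ?_, by simp, n + 1 + K,
      fun m => if m ≤ n then 0 else s ^ (m - (n + 1)) * w₀, ?_, ?_⟩
    · intro i
      dsimp only
      split_ifs
      · exact h.iter_mem _ hcI
      · exact h.iter_mem _ hcI
    · intro i
      dsimp only
      rcases lt_trichotomy i (n + 1) with hi | hi | hi
      · rw [if_pos (by omega), if_pos (by omega), ← Function.iterate_succ_apply' f i c]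
        simpa using hδ
      · subst hi
        rw [if_pos (by omega), if_neg (by omega)]
        have e0 : n + 1 + 1 - n + n' = n' + 1 + 1 := by omega
        rw [e0]
        have e1 : f (f^[n + 1] c) = d (n + 1) := by rw [← hdf, hd]
        have e2 : f^[n' + 1 + 1] c = d (n' + 1) := by rw [hd]
        rw [e1, e2, hd1, hd1', Real.dist_eq]
        have e3 : f y + ρ' * (s * t) - (f y + ρ' * (s * t')) = ρ' * w₀ := by rw [hw₀]; ring
        rw [e3, abs_sign_mul hρ', abs_of_pos hw₀pos]
        exact hw₀δ
      · rw [if_neg (by omega), if_neg (by omega), ← Function.iterate_succ_apply' f _ c]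
        have e0 : (i - n + n').succ = i + 1 - n + n' := by omega
        rw [e0]
        simpa using hδ
    · intro m hm
      dsimp only
      rcases le_or_gt m n with hmn | hmn
      · rw [if_pos hmn, if_pos (by omega), hd]
        exact ⟨le_rfl, by simp⟩
      · obtain ⟨k, rfl⟩ := Nat.exists_eq_add_of_le (show n + 1 ≤ m from hmn)
        rw [if_neg (by omega), if_neg (by omega)]
        have e0 : n + 1 + k + 1 - n + n' = n' + 1 + k + 1 := by omega
        have e1 : n + 1 + k - (n + 1) = k := by omega
        rw [e0, e1]
        refine ⟨by positivity, ?_⟩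
        obtain ⟨i1, i2⟩ := track k (by omega)
        have e2 : f^[n' + 1 + k + 1] c = d (n' + 1 + k) := by rw [hd]
        rw [e2, i2, i1]; ring
    · dsimp only
      have e1 : n + 1 + K - (n + 1) = K := by omega
      rw [if_neg (by omega), e1]
      exact hK
  · -- no point of `C` near the orbit of `c` on the escape side
    have hκ : ∃ κ : ℝ, 0 < κ ∧ ∀ y ∈ C, ∀ n t, 0 < t → t ≤ κ → y ≠ d n - σ n * t := by
      apply fin_min h.fin (fun y κ => ∀ n t, 0 < t → t ≤ κ → y ≠ d n - σ n * t)
      · intro y κ κ' _ hle hP n t h0 h1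
        exact hP n t h0 (h1.trans hle)
      · push Not at hB
        intro y hy
        obtain ⟨κ, hκ, hh⟩ := hB y hy
        exact ⟨κ, hκ, hh⟩
    obtain ⟨κ₀, hκ₀, hfree₀⟩ := hκ
    obtain ⟨κ, hκ, hκε, hfree⟩ : ∃ κ : ℝ, 0 < κ ∧ κ ≤ ε ∧
        ∀ n t, 0 ≤ t → t ≤ κ → d n - σ n * t ∉ C := by
      refine ⟨min κ₀ ε, lt_min hκ₀ hε, min_le_right _ _, fun n t h0 h1 hC => ?_⟩
      rcases h0.eq_or_lt with rfl | h0
      · exact (hin n 0 le_rfl hε.le).2 (by simpa using hC)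
      · exact hfree₀ _ hC n t h0 (h1.trans (min_le_left _ _)) rfl
    have hWI : ∀ n t, 0 ≤ t → t ≤ κ → d n - σ n * t ∈ Set.Icc (0 : ℝ) 1 := by
      intro n t h0 h1
      have hdn := hdI n
      rcases hσ n with hs1 | hs1
      · refine ⟨?_, by rw [hs1]; linarith [hdn.2]⟩
        by_contra hcon
        rw [hs1] at hcon
        apply hfree n (d n) hdn.1 (by linarith)
        rw [hs1, one_mul, sub_self]
        exact h.zero
      · refine ⟨by rw [hs1]; linarith [hdn.1], ?_⟩
        by_contra hcon
        rw [hs1] at hcon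
        apply hfree n (1 - d n) (by linarith [hdn.2]) (by linarith)
        rw [hs1]
        have : d n - -1 * (1 - d n) = 1 := by ring
        rw [this]
        exact h.one
    have hpushW : ∀ n t, 0 ≤ t → t ≤ κ →
        f (d n - σ n * t) = d (n + 1) - σ (n + 1) * (s * t) := by
      intro n t h0 h1
      obtain ⟨τ, hτ, hfτ⟩ := h.push (c := d n - σ n * κ) (σ := σ n) (ℓ := κ + ε) (hσ n)
        (hWI n κ hκ.le le_rfl) (by linarith) (by
          have : d n - σ n * κ + σ n * (κ + ε) = d n + σ n * ε := by ring
          rw [this]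
          exact (hin n ε hε.le le_rfl).1) (by
          intro u hu0 hu1
          rcases le_total u κ with huκ | huκ
          · have : d n - σ n * κ + σ n * u = d n - σ n * (κ - u) := by ring
            rw [this]
            exact hfree n _ (by linarith) (by linarith)
          · have : d n - σ n * κ + σ n * u = d n + σ n * (u - κ) := by ring
            rw [this]
            exact (hin n _ (by linarith) (by linarith)).2)
      have g1 := hfτ κ hκ.le (by linarith)
      rw [sub_add_cancel, hdf] at g1
      have g2 := hfτ (κ + ε) (by linarith) le_rfl
      have g3 : d n - σ n * κ + σ n * (κ + ε) = d n + σ n * ε := by ring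
      rw [g3, hpush' n ε hε.le le_rfl] at g2
      have g4 : σ (n + 1) = τ := by
        apply hdirs (n + 1) τ (s * ε) (by positivity)
        rw [g2, g1]; ring
      have g5 := hfτ (κ - t) (by linarith) (by linarith)
      have g6 : d n - σ n * κ + σ n * (κ - t) = d n - σ n * t := by ring
      rw [g6] at g5
      rw [g5, g1, g4]; ring
    apply esc κ hκ hκε
    intro δ hδ
    obtain ⟨w₀, hw₀, hw₀δ, hw₀κ⟩ : ∃ w₀ : ℝ, 0 < w₀ ∧ w₀ < δ ∧ w₀ ≤ κ :=
      ⟨min (δ / 2) κ, lt_min (by linarith) hκ, (min_le_left _ _).trans_lt (by linarith),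
        min_le_right _ _⟩
    obtain ⟨K, hK, hKi⟩ := first_growth (e := κ) hs hw₀
    refine ⟨fun i => Nat.casesOn i c (fun n => f^[n] (d 0 - σ 0 * w₀)), ?_, ?_, rfl, K,
      fun n => s ^ n * w₀, ?_, hK⟩
    · intro i
      cases i with
      | zero => exact hcI
      | succ n => exact h.iter_mem n (hWI 0 w₀ hw₀.le hw₀κ)
    · intro i
      cases i with
      | zero =>
        change dist (f c) (d 0 - σ 0 * w₀) < δ
        have : f c = d 0 := by rw [hd]; rfl
        rw [this, Real.dist_eq, sub_sub_cancel, abs_sign_mul (hσ 0), abs_of_pos hw₀]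
        exact hw₀δ
      | succ n =>
        change dist (f (f^[n] (d 0 - σ 0 * w₀))) (f^[n + 1] (d 0 - σ 0 * w₀)) < δ
        rw [← Function.iterate_succ_apply' f n]
        simpa using hδ
    · intro n
      change n ≤ K → 0 ≤ s ^ n * w₀ ∧ f^[n] (d 0 - σ 0 * w₀) = d n - σ n * (s ^ n * w₀)
      induction n with
      | zero => intro _; simp [hw₀.le]
      | succ n ih =>
        intro hn
        obtain ⟨i1, i2⟩ := ih (by omega)
        refine ⟨by positivity, ?_⟩
        rw [Function.iterate_succ_apply', i2, hpushW n _ i1 (hKi n (by omega)).le, pow_succ]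
        ring

theorem linking_of_shadowing {f : ℝ → ℝ} {s : ℝ} (h : PL f s (Crit f)) (hs : 1 < s)
    (hsh : ShadowingOn f (Set.Icc (0 : ℝ) 1)) : LinkingProperty f := by
  intro c hc
  by_contra hcon
  push Not at hcon
  -- finiteness of `Crit f` gives a common `ε` for all possible targets
  obtain ⟨ε, hε, hno⟩ := fin_min h.fin
    (fun y ε => ¬ EpsLinkedOn f (Set.Icc (0 : ℝ) 1) ε c y) (by
      rintro y ε ε' - hle hP ⟨m, hm, z, hz, hzy, hj⟩
      exact hP ⟨m, hm, z, hz, hzy, fun j hjm => (hj j hjm).trans hle⟩) (by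
      intro y hy
      have := hcon y hy
      unfold LinkedOn at this
      push Not at this
      exact this)
  exact h.no_unlinked hs hsh hc hε (fun m hm z hz hj hC => hno _ hC ⟨m, hm, z, hz, rfl, hj⟩)

/-! ### Iterates and the transfer of linking -/

/-- The class of maps `PL` is closed under composition; the turning points of `g ∘ f` are those of `f`
together with the preimages under `f` of those of `g`. -/
lemma PL.comp {f g : ℝ → ℝ} {s t : ℝ} {C D : Set ℝ} (h : PL f s C) (k : PL g t D) :
    PL (g ∘ f) (t * s) (C ∪ {x | x ∈ Set.Icc (0 : ℝ) 1 ∧ f x ∈ D}) where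
  pos := mul_pos k.pos h.pos
  maps := k.maps.comp h.maps
  fin := by
    refine h.fin.union ?_
    -- two distinct preimages of the same point are separated by a turning point of `f`
    refine Set.Finite.of_injOn (f := fun x => (f x, C ∩ Set.Iio x))
      (t := D ×ˢ {b | b ⊆ C}) (fun x hx => ⟨hx.2, Set.inter_subset_left⟩) ?_
      (k.fin.prod h.fin.finite_subsets)
    have key : ∀ x y, x ∈ Set.Icc (0 : ℝ) 1 → y ∈ Set.Icc (0 : ℝ) 1 → x < y → f x = f y →
        C ∩ Set.Iio x = C ∩ Set.Iio y → False := by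
      intro x y hx hy hxy hf hC
      by_cases hex : ∃ c ∈ C, c ∈ Set.Ioo x y
      · obtain ⟨c, hc, hc1, hc2⟩ := hex
        have : c ∈ C ∩ Set.Iio x := by rw [hC]; exact ⟨hc, hc2⟩
        exact absurd this.2 (not_lt.2 hc1.le)
      · obtain ⟨α, β, hβ, hf'⟩ := h.aff x y hx.1 hxy hy.2 (fun z hz hzC => hex ⟨z, hzC, hz⟩)
        rw [hf' x ⟨le_refl _, hxy.le⟩, hf' y ⟨hxy.le, le_refl _⟩] at hf
        have h1 : β * (y - x) = 0 := by linarith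
        have hs := h.pos
        rcases mul_eq_zero.1 h1 with h2 | h2
        · rw [h2, abs_zero] at hβ
          linarith
        · linarith
    intro x hx y hy hxy
    simp only [Prod.mk.injEq] at hxy
    rcases lt_trichotomy x y with hlt | heq | hlt
    · exact (key x y hx.1 hy.1 hlt hxy.1 hxy.2).elim
    · exact heq
    · exact (key y x hy.1 hx.1 hlt hxy.1.symm hxy.2.symm).elim
  sub := Set.union_subset h.sub (fun x hx => hx.1)
  zero := Or.inl h.zero
  one := Or.inl h.one
  aff := by
    intro a b ha hab hb hfree
    obtain ⟨α, β, hβ, hf⟩ := h.aff a b ha hab hb (fun x hx hxC => hfree x hx (Or.inl hxC))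
    have hs := h.pos
    have hfa := h.maps (show a ∈ Set.Icc (0 : ℝ) 1 from ⟨ha, by linarith⟩)
    have hfb := h.maps (show b ∈ Set.Icc (0 : ℝ) 1 from ⟨by linarith, hb⟩)
    have ea := hf a ⟨le_refl _, hab.le⟩
    have eb := hf b ⟨hab.le, le_refl _⟩
    rcases abs_eq hs.le |>.1 hβ with hb' | hb'
    · obtain ⟨α', β', hβ', hg⟩ := k.aff (f a) (f b) hfa.1 (by rw [ea, eb, hb']; nlinarith) hfb.2 (by
        intro y hy hyD
        have hx : (y - α) / β ∈ Set.Ioo a b := by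
          rw [hb']
          rw [ea, eb, hb'] at hy
          exact ⟨by rw [lt_div_iff₀ hs]; nlinarith [hy.1], by rw [div_lt_iff₀ hs]; nlinarith [hy.2]⟩
        refine hfree _ hx (Or.inr ⟨⟨by linarith [hx.1], by linarith [hx.2]⟩, ?_⟩)
        rw [hf _ ⟨hx.1.le, hx.2.le⟩]
        have : β ≠ 0 := by rw [hb']; exact hs.ne'
        rw [mul_div_cancel₀ _ this]
        simpa using hyD)
      refine ⟨α' + β' * α, β' * β, by rw [abs_mul, hβ, hβ'], ?_⟩
      intro x hx
      rw [Function.comp_apply, hg, hf x hx]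
      · ring
      · rw [ea, eb, hf x hx, hb']
        exact ⟨by nlinarith [hx.1], by nlinarith [hx.2]⟩
    · obtain ⟨α', β', hβ', hg⟩ := k.aff (f b) (f a) hfb.1 (by rw [ea, eb, hb']; nlinarith) hfa.2 (by
        intro y hy hyD
        have hx : (y - α) / β ∈ Set.Ioo a b := by
          rw [hb', div_neg, ← neg_div]
          rw [ea, eb, hb'] at hy
          exact ⟨by rw [lt_div_iff₀ hs]; nlinarith [hy.2], by rw [div_lt_iff₀ hs]; nlinarith [hy.1]⟩
        refine hfree _ hx (Or.inr ⟨⟨by linarith [hx.1], by linarith [hx.2]⟩, ?_⟩)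
        rw [hf _ ⟨hx.1.le, hx.2.le⟩]
        have : β ≠ 0 := by rw [hb']; linarith
        rw [mul_div_cancel₀ _ this]
        simpa using hyD)
      refine ⟨α' + β' * α, β' * β, by rw [abs_mul, hβ, hβ'], ?_⟩
      intro x hx
      rw [Function.comp_apply, hg, hf x hx]
      · ring
      · rw [ea, eb, hf x hx, hb']
        exact ⟨by nlinarith [hx.2], by nlinarith [hx.1]⟩
  sym := by
    intro c hc hc0 hc1
    have hs := h.pos
    by_cases hcC : c ∈ C
    · obtain ⟨η, hη, hf⟩ := h.sym c hcC hc0 hc1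
      exact ⟨η, hη, fun t h0 h1 => by simp only [Function.comp_apply, hf t h0 h1]⟩
    have hcD : f c ∈ D := by
      rcases hc with hc | hc
      · exact absurd hc hcC
      · exact hc.2
    obtain ⟨r, hr, hfree⟩ := finite_free h.fin c
    obtain ⟨ℓ, hℓ, hℓr, hℓ0, hℓ1⟩ : ∃ ℓ : ℝ, 0 < ℓ ∧ ℓ ≤ r ∧ ℓ ≤ c ∧ ℓ ≤ 1 - c :=
      ⟨min r (min c (1 - c)), lt_min hr (lt_min hc0 (by linarith)), min_le_left _ _,
        (min_le_right _ _).trans (min_le_left _ _), (min_le_right _ _).trans (min_le_right _ _)⟩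
    obtain ⟨α, β, hβ, hf⟩ := h.aff (c - ℓ) (c + ℓ) (by linarith) (by linarith) (by linarith) (by
      intro x hx hxC
      have h1 := hfree x hxC (fun hxc => hcC (hxc ▸ hxC))
      have h2 : |x - c| < ℓ := abs_lt.2 ⟨by linarith [hx.1], by linarith [hx.2]⟩
      linarith)
    have hm := h.maps (show c - ℓ ∈ Set.Icc (0 : ℝ) 1 from ⟨by linarith, by linarith⟩)
    have hp := h.maps (show c + ℓ ∈ Set.Icc (0 : ℝ) 1 from ⟨by linarith, by linarith⟩)
    have em := hf (c - ℓ) ⟨by linarith, by linarith⟩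
    have ep := hf (c + ℓ) ⟨by linarith, by linarith⟩
    have ec := hf c ⟨by linarith, by linarith⟩
    have hsl := mul_pos hs hℓ
    have hin : 0 < f c ∧ f c < 1 := by
      rw [em] at hm
      rw [ep] at hp
      rw [ec]
      rcases abs_eq hs.le |>.1 hβ with hb' | hb' <;> rw [hb'] at hm hp ⊢ <;>
        exact ⟨by nlinarith [hm.1, hp.1, hm.2, hp.2], by nlinarith [hm.1, hp.1, hm.2, hp.2]⟩
    obtain ⟨η, hη, hg⟩ := k.sym (f c) hcD hin.1 hin.2
    refine ⟨min ℓ (η / s), lt_min hℓ (div_pos hη hs), ?_⟩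
    intro t h0 h1
    have h2 : t ≤ ℓ := h1.trans (min_le_left _ _)
    have h3 : s * t ≤ η := by
      have := h1.trans (min_le_right _ _)
      rw [le_div_iff₀ hs] at this
      linarith
    have h4 := hg (s * t) (by positivity) h3
    simp only [Function.comp_apply]
    rw [hf (c - t) ⟨by linarith, by linarith⟩, hf (c + t) ⟨by linarith, by linarith⟩]
    rw [ec] at h4
    rcases abs_eq hs.le |>.1 hβ with hb' | hb'
    · rw [hb'] at h4 ⊢
      rw [show α + s * (c - t) = α + s * c - s * t by ring, h4]
      congr 1
      ring
    · rw [hb'] at h4 ⊢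
      rw [show α + -s * (c - t) = α + -s * c + s * t by ring, ← h4]
      congr 1
      ring

/-- The points of `[0,1]` whose orbit meets `C` before time `n`: the turning points of the `n`-th iterate. -/
def preCrit (f : ℝ → ℝ) (C : Set ℝ) (n : ℕ) : Set ℝ :=
  {x | x ∈ Set.Icc (0 : ℝ) 1 ∧ ∃ i < n, f^[i] x ∈ C}

lemma PL.iterate {f : ℝ → ℝ} {s : ℝ} {C : Set ℝ} (h : PL f s C) (n : ℕ) :
    PL (f^[n + 1]) (s ^ (n + 1)) (preCrit f C (n + 1)) := by
  induction n with
  | zero =>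
    have : preCrit f C (0 + 1) = C := by
      ext x
      constructor
      · rintro ⟨-, i, hi, hx⟩
        obtain rfl : i = 0 := by omega
        exact hx
      · exact fun hx => ⟨h.sub hx, 0, by omega, hx⟩
    rw [this]
    simpa using h
  | succ n ih =>
    have h1 := h.comp ih
    have h2 : C ∪ {x | x ∈ Set.Icc (0 : ℝ) 1 ∧ f x ∈ preCrit f C (n + 1)}
        = preCrit f C (n + 1 + 1) := by
      ext x
      constructor
      · rintro (hx | ⟨hx, -, i, hi, hfx⟩)
        · exact ⟨h.sub hx, 0, by omega, hx⟩
        · exact ⟨hx, i + 1, by omega, hfx⟩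
      · rintro ⟨hx, i, hi, hfx⟩
        rcases i with _ | i
        · exact Or.inl hfx
        · exact Or.inr ⟨hx, h.maps hx, i, by omega, hfx⟩
    rw [h2] at h1
    rwa [pow_succ s (n + 1), Function.iterate_succ f (n + 1)]

lemma PL.lip_iter {f : ℝ → ℝ} {s : ℝ} {C : Set ℝ} (h : PL f s C) (n : ℕ) {a b : ℝ}
    (ha : a ∈ Set.Icc (0 : ℝ) 1) (hb : b ∈ Set.Icc (0 : ℝ) 1) :
    |f^[n] a - f^[n] b| ≤ s ^ n * |a - b| := by
  rcases n with _ | n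
  · simp
  · exact (h.iterate n).lip ha hb

/-- If `f^i(p) = c ∈ C`, every point near `c` has the same image as `f^i(w)` for some `w` near `p`.
The iterate `f^i` may fold at `p` and so cover only one side of `c`, but `f` itself folds at `c`. -/
lemma PL.lift {f : ℝ → ℝ} {s : ℝ} {C : Set ℝ} (h : PL f s C) (hs : 1 ≤ s) {p : ℝ}
    (hp : p ∈ Set.Icc (0 : ℝ) 1) (i : ℕ) (hi : f^[i] p ∈ C) {ε : ℝ} (hε : 0 < ε) :
    ∃ η : ℝ, 0 < η ∧ ∀ v ∈ Set.Icc (0 : ℝ) 1, |v - f^[i] p| ≤ η →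
      ∃ w ∈ Set.Icc (0 : ℝ) 1, (∀ j ≤ i, |f^[j] w - f^[j] p| ≤ ε) ∧ f^[i + 1] w = f v := by
  rcases i with _ | i
  · refine ⟨ε, hε, fun v hv hvc => ⟨v, hv, ?_, rfl⟩⟩
    intro j hj
    obtain rfl : j = 0 := by omega
    exact hvc
  have k := h.iterate i
  obtain ⟨r, hr, hturn⟩ := h.turn
  obtain ⟨ρ, hρ, hfold⟩ := hturn _ hi
  obtain ⟨b, hb, hfree⟩ := finite_free k.fin p
  set S := s ^ (i + 1) with hS
  have hSpos : 0 < S := k.pos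
  obtain ⟨ℓ, hℓ, hℓb, hℓ2⟩ : ∃ ℓ : ℝ, 0 < ℓ ∧ ℓ ≤ b ∧ ℓ ≤ 1 / 2 :=
    ⟨min b (1 / 2), lt_min hb (by norm_num), min_le_left _ _, min_le_right _ _⟩
  obtain ⟨e, he, heI⟩ : ∃ e : ℝ, (e = 1 ∨ e = -1) ∧ ∀ t, 0 ≤ t → t ≤ 1 / 2 →
      p + e * t ∈ Set.Icc (0 : ℝ) 1 := by
    rcases le_total p (1 / 2) with hp2 | hp2
    · exact ⟨1, Or.inl rfl, fun t h0 h1 => ⟨by linarith [hp.1], by linarith⟩⟩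
    · exact ⟨-1, Or.inr rfl, fun t h0 h1 => ⟨by linarith, by linarith [hp.2]⟩⟩
  obtain ⟨σ, hσ, hpush⟩ := k.push he hp hℓ (heI ℓ hℓ.le hℓ2) (by
    intro t h0 h1 hmem
    have h2 := hfree _ hmem (by
      intro h3
      have : e * t = 0 := by linarith
      rcases mul_eq_zero.1 this with h4 | h4
      · rcases he with he | he <;> rw [he] at h4 <;> norm_num at h4
      · linarith)
    rw [add_sub_cancel_left, abs_sign_mul he, abs_of_pos h0] at h2
    linarith)
  refine ⟨min r (min ε (S * ℓ)), lt_min hr (lt_min hε (by positivity)), ?_⟩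
  intro v hv hvc
  have hv1 := hvc.trans (min_le_left _ _)
  have hv2 := (hvc.trans (min_le_right _ _)).trans (min_le_left _ _)
  have hv3 := (hvc.trans (min_le_right _ _)).trans (min_le_right _ _)
  set a := |v - f^[i + 1] p| with ha
  have ha0 : 0 ≤ a := abs_nonneg _
  have ht0 : 0 ≤ a / S := by positivity
  have ht1 : a / S ≤ ℓ := by rw [div_le_iff₀ hSpos]; linarith
  have hw := heI _ ht0 (ht1.trans hℓ2)
  refine ⟨p + e * (a / S), hw, ?_, ?_⟩
  · intro j hj
    have h1 := h.lip_iter j hw hp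
    rw [add_sub_cancel_left, abs_sign_mul he, abs_of_nonneg ht0] at h1
    have h2 : s ^ j ≤ S := pow_le_pow_right₀ hs hj
    have h3 : s ^ j * (a / S) ≤ S * (a / S) := by gcongr
    rw [mul_div_cancel₀ _ hSpos.ne'] at h3
    linarith
  · have h1 := hpush _ ht0 ht1
    rw [mul_div_cancel₀ _ hSpos.ne'] at h1
    rw [Function.iterate_succ_apply', h1]
    have hwI := h.iter_mem (i + 1) hw
    rw [h1] at hwI
    rw [hfold _ hwI (by rw [add_sub_cancel_left, abs_sign_mul hσ, abs_of_nonneg ha0]; exact hv1),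
      hfold v hv hv1, add_sub_cancel_left, abs_sign_mul hσ, abs_of_nonneg ha0]

/-- A quantitative form of the linking property relative to a set `C`, in which the target of the link may
depend on `ε`. -/
def WeakLinking (f : ℝ → ℝ) (C : Set ℝ) : Prop :=
  ∀ c ∈ C, ∀ ε : ℝ, 0 < ε → ∃ m : ℕ, 1 ≤ m ∧ ∃ z ∈ Set.Icc (0 : ℝ) 1, f^[m] z ∈ C ∧
    ∀ j ≤ m, |f^[j] c - f^[j] z| ≤ ε

lemma weakLinking_of_linking {f : ℝ → ℝ} (hl : LinkingProperty f) : WeakLinking f (Crit f) := by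
  intro c hc ε hε
  obtain ⟨y, hy, hlink⟩ := hl c hc
  obtain ⟨m, hm, z, hz, hzy, hclose⟩ := hlink ε hε
  exact ⟨m, hm, z, hz, hzy ▸ hy, hclose⟩

/-- Linking passes to iterates.  A turning point `p` of `f^q` runs into `C` before time `q`; the link of
the last such critical value is pulled back to `p`, and it cannot close up before time `q` since the
remaining orbit segment of `p` stays away from `C`. -/
theorem WeakLinking.iterate {f : ℝ → ℝ} {s : ℝ} {C : Set ℝ} (h : PL f s C) (hs : 1 ≤ s)
    (hl : WeakLinking f C) (n : ℕ) : WeakLinking (f^[n + 1]) (preCrit f C (n + 1)) := by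
  rintro p ⟨hp, i₀, hi₀, hpi₀⟩ ε hε
  classical
  obtain ⟨i, hi, hpi, hmax⟩ : ∃ i, i < n + 1 ∧ f^[i] p ∈ C ∧
      ∀ j, i < j → j < n + 1 → f^[j] p ∉ C := by
    have hmem : i₀ ∈ (Finset.range (n + 1)).filter (fun j => f^[j] p ∈ C) := by
      simp [hpi₀, hi₀]
    obtain ⟨i, hi, hmax⟩ := Finset.exists_max_image _ id ⟨i₀, hmem⟩
    rw [Finset.mem_filter, Finset.mem_range] at hi
    refine ⟨i, hi.1, hi.2, fun j hij hj hjC => ?_⟩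
    have := hmax j (by simp [hj, hjC])
    simp only [id] at this
    omega
  -- `ε₀` bounds the distance from `C` of the orbit of `p` between times `i` and `n + 1`
  obtain ⟨ε₀, hε₀, hfar⟩ : ∃ ε₀ : ℝ, 0 < ε₀ ∧ ∀ j ∈ Set.Ioo i (n + 1), ∀ c ∈ C,
      ε₀ < |c - f^[j] p| := by
    refine fin_min (Set.finite_Ioo i (n + 1)) (fun j ε => ∀ c ∈ C, ε < |c - f^[j] p|)
      (fun j a b _ hba hj c hc => hba.trans_lt (hj c hc)) ?_
    intro j hj
    obtain ⟨r, hr, hfree⟩ := finite_free h.fin (f^[j] p)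
    refine ⟨r, hr, fun c hc => hfree c hc ?_⟩
    rintro rfl
    exact hmax j hj.1 hj.2 hc
  obtain ⟨η, hη, hlift⟩ := h.lift hs hp i hpi hε
  obtain ⟨ε₁, hε₁, h1ε, h1ε₀, h1η⟩ : ∃ ε₁ : ℝ, 0 < ε₁ ∧ ε₁ ≤ ε ∧ ε₁ ≤ ε₀ ∧ ε₁ ≤ η :=
    ⟨min ε (min ε₀ η), lt_min hε (lt_min hε₀ hη), min_le_left _ _,
      (min_le_right _ _).trans (min_le_left _ _), (min_le_right _ _).trans (min_le_right _ _)⟩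
  obtain ⟨m, hm, z, hz, hzC, hclose⟩ := hl _ hpi ε₁ hε₁
  have him : n + 1 ≤ i + m := by
    by_contra hlt
    have h1 := hfar (i + m) ⟨by omega, by omega⟩ _ hzC
    have h2 := hclose m (le_refl _)
    rw [← Function.iterate_add_apply, Nat.add_comm m i, abs_sub_comm] at h2
    linarith
  obtain ⟨w, hw, hwnear, hwz⟩ := hlift z hz (by
    have := hclose 0 (Nat.zero_le _)
    simp only [Function.iterate_zero, id] at this
    rw [abs_sub_comm]
    linarith)
  have hwz' : ∀ j, 1 ≤ j → f^[i + j] w = f^[j] z := by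
    intro j hj
    obtain ⟨j, rfl⟩ := Nat.exists_eq_add_of_le' hj
    rw [show i + (j + 1) = j + (i + 1) by ring, Function.iterate_add_apply, hwz]
    exact (Function.iterate_succ_apply f j z).symm
  have hwclose : ∀ j ≤ i + m, |f^[j] p - f^[j] w| ≤ ε := by
    intro j hj
    rcases le_or_gt j i with hji | hji
    · rw [abs_sub_comm]
      exact hwnear j hji
    · obtain ⟨k, rfl⟩ := Nat.exists_eq_add_of_lt hji
      have h1 := hclose (k + 1) (by omega)
      rw [show i + k + 1 = i + (k + 1) by ring, hwz' (k + 1) (by omega), Nat.add_comm i (k + 1),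
        Function.iterate_add_apply]
      linarith
  have hdm := Nat.div_add_mod (i + m) (n + 1)
  refine ⟨(i + m) / (n + 1), Nat.div_pos him (by omega), w, hw, ?_, ?_⟩
  · rw [← Function.iterate_mul]
    refine ⟨h.iter_mem _ hw, (i + m) % (n + 1), Nat.mod_lt _ (by omega), ?_⟩
    rw [← Function.iterate_add_apply, Nat.add_comm, hdm, hwz' m hm]
    exact hzC
  · intro j hj
    rw [← Function.iterate_mul]
    refine hwclose _ (le_trans ?_ (Nat.div_mul_le_self (i + m) (n + 1)))
    rw [Nat.mul_comm]
    exact Nat.mul_le_mul_right _ hj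

/-! ### Tracking a pseudo-orbit -/

/-- The two kinds of sets of candidate positions, at scale `θ` around `x`, from which tracking can be
continued: either every point of `[0,1]` at distance at most `(s - 1)θ` from `x` is available, or a turning
point `p` close to `x` is, together with a one-sided neighbourhood of `p` of length `6θ`. -/
def Good (s : ℝ) (C F : Set ℝ) (x θ : ℝ) : Prop :=
  (∀ w ∈ Set.Icc (0 : ℝ) 1, |w - x| ≤ (s - 1) * θ → w ∈ F) ∨
  ∃ p ∈ C, |p - x| ≤ 3 * θ ∧ ∃ e : ℝ, (e = 1 ∨ e = -1) ∧ p + e * (6 * θ) ∈ Set.Icc (0 : ℝ) 1 ∧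
    ∀ t, 0 ≤ t → t ≤ 6 * θ → p + e * t ∈ F

/-- The positions at time `j` of the points of `F` whose orbits stay `R`-close to `x` at times
`1, …, j`. -/
def Adv (f : ℝ → ℝ) (x : ℕ → ℝ) (R : ℝ) (F : Set ℝ) (j : ℕ) : Set ℝ :=
  {w | ∃ z ∈ F, f^[j] z = w ∧ ∀ i, 1 ≤ i → i ≤ j → |f^[i] z - x i| ≤ R}

lemma Adv.zero {f : ℝ → ℝ} {x : ℕ → ℝ} {R : ℝ} {F : Set ℝ} {w : ℝ} (hw : w ∈ F) :
    w ∈ Adv f x R F 0 :=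
  ⟨w, hw, rfl, fun i h1 h2 => by omega⟩

lemma Adv.succ {f : ℝ → ℝ} {x : ℕ → ℝ} {R : ℝ} {F : Set ℝ} {j : ℕ} {w : ℝ}
    (hw : w ∈ Adv f x R F j) (hclose : |f w - x (j + 1)| ≤ R) : f w ∈ Adv f x R F (j + 1) := by
  obtain ⟨z, hz, rfl, hzx⟩ := hw
  refine ⟨z, hz, Function.iterate_succ_apply' f j z, fun i h1 h2 => ?_⟩
  rcases h2.lt_or_eq with h3 | rfl
  · exact hzx i h1 (by omega)
  · rw [Function.iterate_succ_apply']
    exact hclose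

lemma sign_sq {σ : ℝ} (hσ : σ = 1 ∨ σ = -1) : σ * σ = 1 := by
  rcases hσ with rfl | rfl <;> norm_num

lemma segment_mem {p e L t : ℝ} (he : e = 1 ∨ e = -1) (hp : p ∈ Set.Icc (0 : ℝ) 1)
    (hL : p + e * L ∈ Set.Icc (0 : ℝ) 1) (h0 : 0 ≤ t) (h1 : t ≤ L) :
    p + e * t ∈ Set.Icc (0 : ℝ) 1 := by
  obtain ⟨a, b⟩ := hp
  obtain ⟨a', b'⟩ := hL
  rcases he with rfl | rfl <;> constructor <;> linarith

/-- Away from `C` the map stretches the ball of radius `θ` onto a ball of radius `sθ`. -/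
lemma PL.good_of_free {f : ℝ → ℝ} {s : ℝ} {C : Set ℝ} (h : PL f s C) {θ x x' : ℝ}
    {G G' : Set ℝ} (hs : 1 ≤ s) (hθ : 0 < θ) (hx : x ∈ Set.Icc (0 : ℝ) 1)
    (hfree : ∀ p ∈ C, θ < |p - x|) (hG : ∀ w ∈ Set.Icc (0 : ℝ) 1, |w - x| ≤ θ → w ∈ G)
    (hx' : |f x - x'| ≤ θ) (hG' : ∀ w ∈ G, |f w - x'| ≤ 10 * s * θ → f w ∈ G') :
    Good s C G' x' θ := by
  left
  intro w hw hwx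
  have hspos := h.pos
  have h0 := hfree 0 h.zero
  have h1 := hfree 1 h.one
  rw [zero_sub, abs_neg, abs_of_nonneg hx.1] at h0
  rw [abs_of_nonneg (by linarith [hx.2])] at h1
  obtain ⟨σ, hσ, hpush⟩ := h.push (c := x - θ) (σ := 1) (ℓ := 2 * θ) (Or.inl rfl)
    ⟨by linarith, by linarith⟩ (by linarith) ⟨by linarith, by linarith⟩ (by
      intro t ht0 ht1 hC
      have h2 := hfree _ hC
      have h3 : |x - θ + 1 * t - x| ≤ θ := abs_le.2 ⟨by linarith, by linarith⟩
      linarith)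
  have hfx := hpush θ hθ.le (by linarith)
  rw [show x - θ + 1 * θ = x by ring] at hfx
  have hwfx : |σ * (w - f x)| ≤ s * θ := by
    rw [abs_sign_mul hσ]
    have h2 : |w - f x| ≤ |w - x'| + |f x - x'| := by
      rw [abs_sub_comm (f x) x']
      exact abs_sub_le _ _ _
    linarith
  rw [abs_le] at hwfx
  set u := σ * (w - f x) / s with hu
  have hsu : s * u = σ * (w - f x) := by rw [hu]; field_simp
  have hu1 : -θ ≤ u := by rw [hu, le_div_iff₀ hspos]; linarith
  have hu2 : u ≤ θ := by rw [hu, div_le_iff₀ hspos]; linarith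
  have hfw : f (x - θ + 1 * (θ + u)) = w := by
    rw [hpush _ (by linarith) (by linarith), mul_add, hsu, mul_add, ← mul_assoc σ σ, sign_sq hσ]
    linarith
  rw [← hfw]
  refine hG' _ (hG _ ⟨by linarith, by linarith⟩ (abs_le.2 ⟨by linarith, by linarith⟩)) ?_
  rw [hfw]
  nlinarith

/-- A segment of available positions extending by at least `θ` on one side of `x` and by at least `7θ` on
the other is good, now or one step later. -/
lemma PL.good_of_segment {f : ℝ → ℝ} {s : ℝ} {C : Set ℝ} (h : PL f s C) {θ x x' c σ a L : ℝ}
    {G G' : Set ℝ} (hs : 1 ≤ s) (hθ : 0 < θ) (hσ : σ = 1 ∨ σ = -1)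
    (hseg : ∀ t, 0 ≤ t → t ≤ L → c + σ * t ∈ G ∧ c + σ * t ∈ Set.Icc (0 : ℝ) 1)
    (hxa : x = c + σ * a) (ha : θ ≤ a) (haL : a + 7 * θ ≤ L)
    (hx' : |f x - x'| ≤ θ) (hG' : ∀ w ∈ G, |f w - x'| ≤ 10 * s * θ → f w ∈ G') :
    Good s C G x θ ∨ Good s C G' x' θ := by
  by_cases hex : ∃ p ∈ C, |p - x| ≤ θ
  · obtain ⟨p, hpC, hpx⟩ := hex
    left; right
    have h1 : p = c + σ * (a + σ * (p - x)) := by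
      rw [mul_add, ← mul_assoc, sign_sq hσ, hxa]
      ring
    have h2 : |σ * (p - x)| ≤ θ := by rwa [abs_sign_mul hσ]
    rw [abs_le] at h2
    set u := a + σ * (p - x) with hu
    have h3 : ∀ t, p + σ * t = c + σ * (u + t) := fun t => by rw [h1]; ring
    refine ⟨p, hpC, by linarith, σ, hσ, ?_, ?_⟩
    · rw [h3]
      exact (hseg _ (by linarith) (by linarith)).2
    · intro t h0 h1
      rw [h3]
      exact (hseg _ (by linarith) (by linarith)).1
  · right
    push Not at hex
    have hxI : x ∈ Set.Icc (0 : ℝ) 1 := by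
      rw [hxa]
      exact (hseg _ (by linarith) (by linarith)).2
    refine h.good_of_free hs hθ hxI hex ?_ hx' hG'
    intro w _ hwx
    have h1 : w = c + σ * (a + σ * (w - x)) := by
      rw [mul_add, ← mul_assoc, sign_sq hσ, hxa]
      ring
    have h2 : |σ * (w - x)| ≤ θ := by rwa [abs_sign_mul hσ]
    rw [abs_le] at h2
    rw [h1]
    exact (hseg _ (by linarith) (by linarith)).1

/-- Passing to a smaller scale costs at most one step. -/
lemma PL.good_reduce {f : ℝ → ℝ} {s : ℝ} {C : Set ℝ} (h : PL f s C) {r θ θ' x x' : ℝ}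
    {F G' : Set ℝ} (hs : 1 ≤ s)
    (hturn : ∀ y ∈ C, ∃ ρ : ℝ, (ρ = 1 ∨ ρ = -1) ∧ ∀ w ∈ Set.Icc (0 : ℝ) 1, |w - y| ≤ r →
      f w = f y + ρ * (s * |w - y|))
    (hθ' : 0 < θ') (hθθ : θ' ≤ θ) (hr : 6 * θ ≤ r) (hx : x ∈ Set.Icc (0 : ℝ) 1)
    (hF : Good s C F x θ) (hx' : |f x - x'| ≤ θ')
    (hG' : ∀ w ∈ F, |f w - x'| ≤ 10 * s * θ' → f w ∈ G') :
    Good s C F x θ' ∨ Good s C G' x' θ' := by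
  have hspos := h.pos
  rcases hF with hF | ⟨p, hpC, hpx, e, he, heI, heF⟩
  · left; left
    intro w hw hwx
    refine hF w hw (hwx.trans ?_)
    exact mul_le_mul_of_nonneg_left hθθ (by linarith)
  rcases le_or_gt (|p - x|) (3 * θ') with hle | hgt
  · left; right
    exact ⟨p, hpC, hle, e, he, segment_mem he (h.sub hpC) heI (by linarith) (by linarith),
      fun t h0 h1 => heF t h0 (by linarith)⟩
  right; left
  intro w hw hwx
  obtain ⟨ρ, hρ, hfold⟩ := hturn p hpC
  rw [abs_sub_comm] at hpx hgt
  have hfx := hfold x hx (by linarith)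
  set u := |x - p| with hu
  have hwfx : |ρ * (w - f x)| ≤ s * θ' := by
    rw [abs_sign_mul hρ]
    have h2 : |w - f x| ≤ |w - x'| + |f x - x'| := by
      rw [abs_sub_comm (f x) x']
      exact abs_sub_le _ _ _
    linarith
  rw [abs_le] at hwfx
  set v := ρ * (w - f x) / s with hv
  have hsv : s * v = ρ * (w - f x) := by rw [hv]; field_simp
  have hv1 : -θ' ≤ v := by rw [hv, le_div_iff₀ hspos]; linarith
  have hv2 : v ≤ θ' := by rw [hv, div_le_iff₀ hspos]; linarith
  have h0 : 0 ≤ u + v := by linarith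
  have h1 : u + v ≤ 6 * θ := by linarith
  have hmem := segment_mem he (h.sub hpC) heI h0 h1
  have habs : |p + e * (u + v) - p| = u + v := by
    rw [add_sub_cancel_left, abs_sign_mul he, abs_of_nonneg h0]
  have hfw : f (p + e * (u + v)) = w := by
    rw [hfold _ hmem (by linarith), habs, mul_add, hsv, mul_add, ← mul_assoc ρ ρ,
      sign_sq hρ]
    linarith
  rw [← hfw]
  refine hG' _ (heF _ h0 h1) ?_
  rw [hfw]
  nlinarith

/-- The state while following the orbit of a turning point: `c` is the current point of that orbit, a
one-sided neighbourhood of `c` of length `2sθ` is available, the pseudo-orbit point `x` is at signed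
distance `a` from `c`, and the linking orbit is at `ζ`, on the available side. -/
def Following (s : ℝ) (G : Set ℝ) (θ κ c x ζ : ℝ) : Prop :=
  ∃ σ a τ : ℝ, (σ = 1 ∨ σ = -1) ∧
    (∀ t, 0 ≤ t → t ≤ 2 * s * θ → c + σ * t ∈ G ∧ c + σ * t ∈ Set.Icc (0 : ℝ) 1) ∧
    x = c + σ * a ∧ -κ ≤ a ∧ a < θ ∧ ζ = c + σ * τ ∧ 0 ≤ τ ∧ τ ≤ 2 * θ

lemma good_of_crit {s θ c x σ a u : ℝ} {C G : Set ℝ} (hs : 8 ≤ s) (hθ : 0 < θ)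
    (hσ : σ = 1 ∨ σ = -1)
    (hseg : ∀ t, 0 ≤ t → t ≤ 2 * s * θ → c + σ * t ∈ G ∧ c + σ * t ∈ Set.Icc (0 : ℝ) 1)
    (hxa : x = c + σ * a) (ha0 : -θ ≤ a) (ha1 : a < θ) (hu0 : 0 ≤ u) (hu1 : u ≤ 2 * θ)
    (huC : c + σ * u ∈ C) : Good s C G x θ := by
  have h1 : ∀ t, c + σ * u + σ * t = c + σ * (u + t) := fun t => by ring
  have h2 : 8 * θ ≤ s * θ := by nlinarith
  right
  refine ⟨_, huC, ?_, σ, hσ, ?_, ?_⟩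
  · rw [hxa, show c + σ * u - (c + σ * a) = σ * (u - a) by ring, abs_sign_mul hσ, abs_le]
    exact ⟨by linarith, by linarith⟩
  · rw [h1]
    exact (hseg _ (by linarith) (by linarith)).2
  · intro t h0 h3
    rw [h1]
    exact (hseg _ (by linarith) (by linarith)).1

/-- One step of following a turning orbit: either the pseudo-orbit becomes good, or it keeps
following. -/
lemma PL.following_step {f : ℝ → ℝ} {s : ℝ} {C : Set ℝ} (h : PL f s C) (hs : 8 ≤ s)
    {θ δ κ κ' c x x' ζ : ℝ} {G G' : Set ℝ} (hθ : 0 < θ) (hδ : 0 ≤ δ) (hκ0 : 0 ≤ κ)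
    (hκκ : s * κ + δ ≤ κ') (hκ' : κ' ≤ θ) (hx : x ∈ Set.Icc (0 : ℝ) 1)
    (hf : Following s G θ κ c x ζ) (hx' : |f x - x'| ≤ δ) {x'' : ℝ} (hx'' : |f x' - x''| ≤ θ)
    (hζ' : |f c - f ζ| ≤ 2 * θ)
    (hG' : ∀ w ∈ G, |f w - x'| ≤ 10 * s * θ → f w ∈ G') {G'' : Set ℝ}
    (hG'' : ∀ w ∈ G', |f w - x''| ≤ 10 * s * θ → f w ∈ G'') :
    Good s C G x θ ∨ Good s C G' x' θ ∨ Good s C G'' x'' θ ∨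
      Following s G' θ κ' (f c) x' (f ζ) := by
  have hspos := h.pos
  have hδκ' : δ ≤ κ' := by nlinarith
  have hκ : κ ≤ θ := by nlinarith
  have h8 : 8 * θ ≤ s * θ := by nlinarith
  obtain ⟨σ, a, τ, hσ, hseg, hxa, ha0, ha1, hζ, hτ0, hτ1⟩ := hf
  by_cases hex : ∃ u, 0 ≤ u ∧ u ≤ 2 * θ ∧ c + σ * u ∈ C
  · obtain ⟨u, hu0, hu1, huC⟩ := hex
    exact Or.inl (good_of_crit hs hθ hσ hseg hxa (by linarith) ha1 hu0 hu1 huC)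
  right
  have hnoC : ∀ u, 0 ≤ u → u ≤ 2 * θ → c + σ * u ∉ C := fun u h0 h1 hC => hex ⟨u, h0, h1, hC⟩
  have hcI : c ∈ Set.Icc (0 : ℝ) 1 := by
    have := (hseg 0 le_rfl (by positivity)).2
    simpa using this
  obtain ⟨σ', hσ', hpush⟩ := h.push hσ hcI (ℓ := 2 * θ) (by linarith)
    (hseg _ (by linarith) (by linarith)).2 (fun t h0 h1 => hnoC t h0.le h1.le)
  set a' := σ' * (x' - f c) with ha'
  have hxa' : x' = f c + σ' * a' := by
    rw [ha', ← mul_assoc, sign_sq hσ']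
    ring
  have hbound : -κ' ≤ a' ∧ a' ≤ s * θ + θ := by
    rcases le_or_gt 0 a with h0 | h0
    · have h1 := hpush a h0 (by linarith)
      rw [← hxa] at h1
      have h2 : |σ' * (f x - x')| ≤ δ := by rwa [abs_sign_mul hσ']
      have h3 : σ' * (f x - x') = s * a - a' := by
        rw [h1, ha', show σ' * (f c + σ' * (s * a) - x') = σ' * σ' * (s * a) - σ' * (x' - f c) by ring,
          sign_sq hσ']
        ring
      rw [h3, abs_le] at h2
      constructor <;> nlinarith
    · have h1 := h.lip hx hcI
      rw [hxa, add_sub_cancel_left, abs_sign_mul hσ, abs_of_neg h0, ← hxa] at h1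
      have h2 : |a'| ≤ s * κ + δ := by
        rw [ha', abs_sign_mul hσ']
        have h3 : |x' - f c| ≤ |f x - x'| + |f x - f c| := by
          rw [abs_sub_comm (f x) x']
          exact abs_sub_le _ _ _
        nlinarith
      rw [abs_le] at h2
      constructor <;> nlinarith
  have hseg' : ∀ t, 0 ≤ t → t ≤ 2 * s * θ → f c + σ' * t ∈ G' ∧
      f c + σ' * t ∈ Set.Icc (0 : ℝ) 1 := by
    intro t h0 h1
    have h2 : 0 ≤ t / s := by positivity
    have h3 : t / s ≤ 2 * θ := by rw [div_le_iff₀ hspos]; linarith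
    have h4 := hpush _ h2 h3
    rw [mul_div_cancel₀ _ hspos.ne'] at h4
    have h5 := hseg (t / s) h2 (by linarith)
    rw [← h4]
    refine ⟨hG' _ h5.1 ?_, h.maps h5.2⟩
    rw [h4, hxa', show f c + σ' * t - (f c + σ' * a') = σ' * (t - a') by ring, abs_sign_mul hσ',
      abs_le]
    constructor <;> linarith
  rcases lt_or_ge a' θ with h1 | h1
  · right; right
    have h2 := hpush τ hτ0 hτ1
    rw [← hζ] at h2
    refine ⟨σ', a', s * τ, hσ', hseg', hxa', hbound.1, h1, h2, by positivity, ?_⟩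
    rw [h2, abs_sub_comm, add_sub_cancel_left, abs_sign_mul hσ'] at hζ'
    exact (le_abs_self _).trans hζ'
  · rcases h.good_of_segment (by linarith) hθ hσ' hseg' hxa' h1 (by linarith) hx'' hG'' with h2 | h2
    · exact Or.inl h2
    · exact Or.inr (Or.inl h2)

/-- Starting near a turning point `y` that is linked to `C` in time `m`, the pseudo-orbit reaches a good
state after finitely many steps. -/
lemma PL.follow {f : ℝ → ℝ} {s : ℝ} {C : Set ℝ} (h : PL f s C) (hs : 8 ≤ s) {r θ δ : ℝ}
    (hturn : ∀ y ∈ C, ∃ ρ : ℝ, (ρ = 1 ∨ ρ = -1) ∧ ∀ w ∈ Set.Icc (0 : ℝ) 1, |w - y| ≤ r →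
      f w = f y + ρ * (s * |w - y|))
    (hθ : 0 < θ) (hr : 6 * θ ≤ r) {x : ℕ → ℝ} (hx : ∀ n, x n ∈ Set.Icc (0 : ℝ) 1) (hδ : 0 < δ)
    (herr : ∀ n, |f (x n) - x (n + 1)| ≤ δ) {F : Set ℝ} {y e : ℝ} (hy : y ∈ C)
    (hyx : |y - x 0| ≤ 3 * θ) (he : e = 1 ∨ e = -1) (heI : y + e * (6 * θ) ∈ Set.Icc (0 : ℝ) 1)
    (heF : ∀ t, 0 ≤ t → t ≤ 6 * θ → y + e * t ∈ F) {m : ℕ} (hm : 1 ≤ m) {z : ℝ}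
    (hz : z ∈ Set.Icc (0 : ℝ) 1) (hzC : f^[m] z ∈ C)
    (hyz : ∀ j ≤ m, |f^[j] y - f^[j] z| ≤ 2 * θ) (hδm : ∀ j ≤ m, δ * (s + 1) ^ j ≤ θ) :
    ∃ j, 1 ≤ j ∧ Good s C (Adv f x (10 * s * θ) F j) (x j) θ := by
  have hspos := h.pos
  by_contra hno
  push Not at hno
  have hδθ : δ ≤ θ := by simpa using hδm 0 (Nat.zero_le _)
  have h8 : 8 * θ ≤ s * θ := by nlinarith
  have hyI := h.sub hy
  have hadv : ∀ j, ∀ w ∈ Adv f x (10 * s * θ) F j, |f w - x (j + 1)| ≤ 10 * s * θ →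
      f w ∈ Adv f x (10 * s * θ) F (j + 1) := fun j w hw hc => Adv.succ hw hc
  have main : ∀ j, j + 1 ≤ m → Following s (Adv f x (10 * s * θ) F (j + 1)) θ
      (δ * (s + 1) ^ (j + 1)) (f^[j + 1] y) (x (j + 1)) (f^[j + 1] z) := by
    intro j
    induction j with
    | zero =>
      intro _
      obtain ⟨ρ, hρ, hfold⟩ := hturn y hy
      simp only [zero_add, Function.iterate_one, pow_one]
      rw [abs_sub_comm] at hyx
      have hfx := hfold (x 0) (hx 0) (by linarith)
      set u := |x 0 - y| with hu
      have hu0 : 0 ≤ u := abs_nonneg _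
      set a := ρ * (x 1 - f y) with ha
      have hxa : x 1 = f y + ρ * a := by
        rw [ha, ← mul_assoc, sign_sq hρ]
        ring
      have hbound : -δ ≤ a ∧ a ≤ s * (3 * θ) + δ := by
        have h2 : |ρ * (f (x 0) - x 1)| ≤ δ := by
          rw [abs_sign_mul hρ]
          exact herr 0
        have h3 : ρ * (f (x 0) - x 1) = s * u - a := by
          rw [hfx, ha, show ρ * (f y + ρ * (s * u) - x 1) = ρ * ρ * (s * u) - ρ * (x 1 - f y) by ring,
            sign_sq hρ]
          ring
        rw [h3, abs_le] at h2
        constructor <;> nlinarith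
      have hseg : ∀ t, 0 ≤ t → t ≤ 6 * s * θ → f y + ρ * t ∈ Adv f x (10 * s * θ) F 1 ∧
          f y + ρ * t ∈ Set.Icc (0 : ℝ) 1 := by
        intro t h0 h1
        have h2 : 0 ≤ t / s := by positivity
        have h3 : t / s ≤ 6 * θ := by rw [div_le_iff₀ hspos]; linarith
        have hmem := segment_mem he hyI heI h2 h3
        have habs : |y + e * (t / s) - y| = t / s := by
          rw [add_sub_cancel_left, abs_sign_mul he, abs_of_nonneg h2]
        have h4 := hfold _ hmem (by linarith)
        rw [habs, mul_div_cancel₀ _ hspos.ne'] at h4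
        rw [← h4]
        refine ⟨hadv 0 _ (Adv.zero (heF _ h2 h3)) ?_, h.maps hmem⟩
        rw [h4, zero_add, hxa, show f y + ρ * t - (f y + ρ * a) = ρ * (t - a) by ring,
          abs_sign_mul hρ, abs_le]
        constructor <;> linarith
      rcases lt_or_ge a θ with h1 | h1
      · have hyz0 := hyz 0 (Nat.zero_le _)
        have hyz1 := hyz 1 hm
        simp only [Function.iterate_zero, id, Function.iterate_one] at hyz0 hyz1
        rw [abs_sub_comm] at hyz0
        have hfz := hfold z hz (by linarith)
        refine ⟨ρ, a, s * |z - y|, hρ, fun t h0 h2 => hseg t h0 (by linarith), hxa, ?_, h1, hfz,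
          by positivity, ?_⟩
        · nlinarith [hbound.1]
        · rw [hfz, abs_sub_comm, add_sub_cancel_left, abs_sign_mul hρ] at hyz1
          exact (le_abs_self _).trans hyz1
      · rcases h.good_of_segment (by linarith) hθ hρ hseg hxa h1 (by linarith)
          ((herr 1).trans hδθ) (hadv 1) with h2 | h2
        · exact absurd h2 (hno 1 le_rfl)
        · exact absurd h2 (hno 2 (by norm_num))
    | succ j ih =>
      intro hj
      have hpow : 0 ≤ (s + 1) ^ (j + 1) := by positivity
      have hpow1 : 1 ≤ (s + 1) ^ (j + 1) := one_le_pow₀ (by linarith)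
      have hζ := hyz (j + 1 + 1) hj
      simp only [Function.iterate_succ_apply' f (j + 1)] at hζ ⊢
      rcases h.following_step hs hθ hδ.le (mul_nonneg hδ.le hpow)
        (κ' := δ * (s + 1) ^ (j + 1 + 1)) (by rw [pow_succ _ (j + 1)]; nlinarith)
        (hδm _ hj) (hx (j + 1)) (ih (by omega)) (herr (j + 1)) ((herr (j + 1 + 1)).trans hδθ) hζ
        (hadv (j + 1)) (hadv (j + 1 + 1)) with h1 | h1 | h1 | h1
      · exact absurd h1 (hno _ (by omega))
      · exact absurd h1 (hno _ (by omega))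
      · exact absurd h1 (hno _ (by omega))
      · exact h1
  obtain ⟨m, rfl⟩ := Nat.exists_eq_add_of_le' hm
  obtain ⟨σ, a, τ, hσ, hseg, hxa, ha0, ha1, hζ, hτ0, hτ1⟩ := main m le_rfl
  exact hno (m + 1) (by omega) (good_of_crit hs hθ hσ hseg hxa
    (by linarith [hδm (m + 1) le_rfl]) ha1 hτ0 hτ1 (hζ ▸ hzC))

/-- The tracking step: from a good state at any scale `θ ≥ θ'`, a pseudo-orbit with small enough errors
reaches a good state at scale `θ'`. -/
theorem PL.track {f : ℝ → ℝ} {s : ℝ} {C : Set ℝ} (h : PL f s C) (hs : 8 ≤ s)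
    (hl : WeakLinking f C) {r : ℝ}
    (hturn : ∀ y ∈ C, ∃ ρ : ℝ, (ρ = 1 ∨ ρ = -1) ∧ ∀ w ∈ Set.Icc (0 : ℝ) 1, |w - y| ≤ r →
      f w = f y + ρ * (s * |w - y|)) {θ' : ℝ} (hθ' : 0 < θ') :
    ∃ δ : ℝ, 0 < δ ∧ ∀ θ, θ' ≤ θ → 6 * θ ≤ r → 12 * θ ≤ 1 → ∀ (F : Set ℝ) (x : ℕ → ℝ),
      (∀ n, x n ∈ Set.Icc (0 : ℝ) 1) → (∀ n, |f (x n) - x (n + 1)| ≤ δ) → Good s C F (x 0) θ →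
      ∃ m, 1 ≤ m ∧ Good s C (Adv f x (10 * s * θ') F m) (x m) θ' := by
  obtain ⟨δ, hδ, hlink⟩ := fin_min h.fin
    (fun y δ => ∃ m : ℕ, 1 ≤ m ∧ ∃ z ∈ Set.Icc (0 : ℝ) 1, f^[m] z ∈ C ∧
      (∀ j ≤ m, |f^[j] y - f^[j] z| ≤ 2 * θ') ∧ ∀ j ≤ m, δ * (s + 1) ^ j ≤ θ')
    (by
      rintro y ε ε' hε' hle ⟨m, hm, z, hz, hzC, hc, hp⟩
      refine ⟨m, hm, z, hz, hzC, hc, fun j hj => le_trans ?_ (hp j hj)⟩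
      have : 0 ≤ (s + 1) ^ j := by have := h.pos; positivity
      exact mul_le_mul_of_nonneg_right hle this)
    (by
      intro y hy
      obtain ⟨m, hm, z, hz, hzC, hc⟩ := hl y hy (2 * θ') (by linarith)
      have hpos : 0 < (s + 1) ^ m := by have := h.pos; positivity
      refine ⟨θ' / (s + 1) ^ m, div_pos hθ' hpos, m, hm, z, hz, hzC, hc, fun j hj => ?_⟩
      have : (s + 1) ^ j ≤ (s + 1) ^ m := pow_le_pow_right₀ (by linarith) hj
      rw [div_mul_eq_mul_div, div_le_iff₀ hpos]
      exact mul_le_mul_of_nonneg_left this hθ'.le)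
  have hδθ : δ ≤ θ' := by
    obtain ⟨m, -, z, -, -, -, hp⟩ := hlink 0 h.zero
    simpa using hp 0 (Nat.zero_le _)
  refine ⟨δ, hδ, ?_⟩
  intro θ hθθ hr hθ1 F x hx herr hF
  have hadv : ∀ w ∈ F, |f w - x 1| ≤ 10 * s * θ' → f w ∈ Adv f x (10 * s * θ') F 1 :=
    fun w hw hc => Adv.succ (Adv.zero hw) hc
  have herr0 : |f (x 0) - x 1| ≤ θ' := (herr 0).trans hδθ
  rcases h.good_reduce (by linarith) hturn hθ' hθθ hr (hx 0) hF herr0 hadv with h1 | h1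
  swap
  · exact ⟨1, le_rfl, h1⟩
  have hcrit : (∃ p ∈ C, |p - x 0| ≤ 3 * θ' ∧ ∃ e : ℝ, (e = 1 ∨ e = -1) ∧
      p + e * (6 * θ') ∈ Set.Icc (0 : ℝ) 1 ∧ ∀ t, 0 ≤ t → t ≤ 6 * θ' → p + e * t ∈ F) →
      ∃ m, 1 ≤ m ∧ Good s C (Adv f x (10 * s * θ') F m) (x m) θ' := by
    rintro ⟨p, hpC, hpx, e, he, heI, heF⟩
    obtain ⟨m, hm, z, hz, hzC, hc, hp⟩ := hlink p hpC
    exact h.follow hs hturn hθ' (by linarith) hx hδ herr hpC hpx he heI heF hm hz hzC hc hp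
  rcases h1 with h1 | h1
  swap
  · exact hcrit h1
  by_cases hex : ∃ p ∈ C, |p - x 0| ≤ θ'
  · obtain ⟨p, hpC, hpx⟩ := hex
    have hpI := h.sub hpC
    obtain ⟨e, he, heI⟩ : ∃ e : ℝ, (e = 1 ∨ e = -1) ∧ p + e * (6 * θ') ∈ Set.Icc (0 : ℝ) 1 := by
      rcases le_total p (1 / 2) with hp2 | hp2
      · exact ⟨1, Or.inl rfl, by linarith [hpI.1], by linarith⟩
      · exact ⟨-1, Or.inr rfl, by linarith, by linarith [hpI.2]⟩
    refine hcrit ⟨p, hpC, by linarith, e, he, heI, fun t h0 h2 => ?_⟩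
    refine h1 _ (segment_mem he hpI heI h0 h2) ?_
    have h3 : |p + e * t - x 0| ≤ |p - x 0| + |e * t| := by
      rw [show p + e * t - x 0 = (p - x 0) + e * t by ring]
      exact abs_add_le _ _
    rw [abs_sign_mul he, abs_of_nonneg h0] at h3
    nlinarith
  · push Not at hex
    exact ⟨1, le_rfl, h.good_of_free (by linarith) hθ' (hx 0) hex
      (fun w hw hwx => h1 w hw (hwx.trans (by nlinarith))) herr0 hadv⟩

/-! ### Linking implies s-limit shadowing -/

lemma Good.mono {s x θ : ℝ} {C F F' : Set ℝ} (h : Good s C F x θ) (hF : F ⊆ F') :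
    Good s C F' x θ := by
  rcases h with h | ⟨p, hp, hpx, e, he, heI, heF⟩
  · exact Or.inl fun w hw hwx => hF (h w hw hwx)
  · exact Or.inr ⟨p, hp, hpx, e, he, heI, fun t h0 h1 => hF (heF t h0 h1)⟩

lemma Good.nonempty {s x θ : ℝ} {C F : Set ℝ} (h : Good s C F x θ) (hs : 1 ≤ s) (hθ : 0 ≤ θ)
    (hx : x ∈ Set.Icc (0 : ℝ) 1) : F.Nonempty := by
  rcases h with h | ⟨p, hp, hpx, e, he, heI, heF⟩
  · refine ⟨x, h x hx ?_⟩
    rw [sub_self, abs_zero]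
    exact mul_nonneg (by linarith) hθ
  · exact ⟨_, heF 0 le_rfl (by linarith)⟩

lemma PL.continuousOn_iterate {f : ℝ → ℝ} {s : ℝ} {C : Set ℝ} (h : PL f s C) (n : ℕ) :
    ContinuousOn (f^[n]) (Set.Icc (0 : ℝ) 1) := by
  have hn : 0 ≤ s ^ n := pow_nonneg h.pos.le n
  refine LipschitzOnWith.continuousOn (K := ⟨s ^ n, hn⟩) (LipschitzOnWith.of_dist_le_mul ?_)
  intro a ha b hb
  rw [Real.dist_eq, Real.dist_eq]
  exact h.lip_iter n ha hb

/-- Shadowing, together with its asymptotic refinement, for maps of slope at least `8` with linking.  The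
shadowing point is found in a nested intersection of compact sets of points that track the pseudo-orbit up
to times `0 = n₀ < n₁ < ⋯`, at scales `θ₀ / 2 ^ k` that are refined as soon as the remaining errors
permit. -/
theorem PL.shadow_of_weakLinking {f : ℝ → ℝ} {s : ℝ} {C : Set ℝ} (h : PL f s C) (hs : 8 ≤ s)
    (hl : WeakLinking f C) {ε : ℝ} (hε : 0 < ε) :
    ∃ δ : ℝ, 0 < δ ∧ ∀ x : ℕ → ℝ, (∀ n, x n ∈ Set.Icc (0 : ℝ) 1) →
      (∀ n, |f (x n) - x (n + 1)| ≤ δ) →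
      ∃ z ∈ Set.Icc (0 : ℝ) 1, (∀ n, |f^[n] z - x n| ≤ ε) ∧
        ((∀ η : ℝ, 0 < η → ∃ N, ∀ n ≥ N, |f (x n) - x (n + 1)| ≤ η) →
          ∀ η : ℝ, 0 < η → ∃ N, ∀ n ≥ N, |f^[n] z - x n| ≤ η) := by
  have hspos := h.pos
  obtain ⟨r, hr, hturn⟩ := h.turn
  obtain ⟨θ₀, hθ₀, hθr, hθ1, hθε⟩ : ∃ θ₀ : ℝ, 0 < θ₀ ∧ 6 * θ₀ ≤ r ∧ 12 * θ₀ ≤ 1 ∧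
      10 * s * θ₀ ≤ ε := by
    refine ⟨min (r / 6) (min (1 / 12) (ε / (10 * s))),
      lt_min (by positivity) (lt_min (by norm_num) (by positivity)), ?_, ?_, ?_⟩
    · have := min_le_left (r / 6) (min (1 / 12) (ε / (10 * s)))
      linarith
    · have := (min_le_right (r / 6) (min (1 / 12) (ε / (10 * s)))).trans (min_le_left _ _)
      linarith
    · have := (min_le_right (r / 6) (min (1 / 12) (ε / (10 * s)))).trans (min_le_right _ _)
      rw [le_div_iff₀ (by positivity)] at this
      linarith
  set θ : ℕ → ℝ := fun k => θ₀ / 2 ^ k with hθdef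
  have hθpos : ∀ k, 0 < θ k := fun k => by positivity
  have hθanti : ∀ k l, k ≤ l → θ l ≤ θ k := fun k l hkl =>
    div_le_div_of_nonneg_left hθ₀.le (by positivity) (pow_le_pow_right₀ (by norm_num) hkl)
  have hθz : θ 0 = θ₀ := by simp [hθdef]
  have hθle : ∀ k, θ k ≤ θ₀ := fun k => hθz ▸ hθanti 0 k (Nat.zero_le k)
  choose δ hδ htrack using fun k => h.track hs hl hturn (hθpos k)
  refine ⟨δ 0, hδ 0, ?_⟩
  intro x hx herr
  -- a state `(n, k, E)`: the points of `E` have been tracked up to time `n`, and the scale is `θ k`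
  obtain ⟨u, hP, hR⟩ := dep_seq (α := ℕ × ℕ × Set ℝ)
    (P := fun i a => (i = 0 → a.1 = 0 ∧ ∀ z ∈ a.2.2, |z - x 0| ≤ ε) ∧
      IsClosed a.2.2 ∧ a.2.2 ⊆ Set.Icc (0 : ℝ) 1 ∧ (∀ j ≥ a.1, |f (x j) - x (j + 1)| ≤ δ a.2.1) ∧
      Good s C (f^[a.1] '' a.2.2) (x a.1) (θ a.2.1))
    (R := fun _ a b => a.1 < b.1 ∧ a.2.1 ≤ b.2.1 ∧ b.2.2 ⊆ a.2.2 ∧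
      (∀ z ∈ b.2.2, ∀ t, a.1 < t → t ≤ b.1 → |f^[t] z - x t| ≤ 10 * s * θ b.2.1) ∧
      ((∀ j ≥ a.1, |f (x j) - x (j + 1)| ≤ δ (a.2.1 + 1)) → b.2.1 = a.2.1 + 1))
    (by
      refine ⟨(0, 0, Set.Icc (0 : ℝ) 1 ∩ Metric.closedBall (x 0) ((s - 1) * θ₀)),
        fun _ => ⟨rfl, ?_⟩, isClosed_Icc.inter Metric.isClosed_closedBall, Set.inter_subset_left,
        fun j _ => herr j, Or.inl ?_⟩
      · rintro z ⟨-, hz⟩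
        rw [Metric.mem_closedBall, Real.dist_eq] at hz
        nlinarith
      · intro w hw hwx
        rw [hθz] at hwx
        exact ⟨w, ⟨hw, by rwa [Metric.mem_closedBall, Real.dist_eq]⟩, rfl⟩)
    (by
      rintro i ⟨n, k, E⟩ ⟨-, hcl, hEI, herrk, hgood⟩
      simp only at hcl hEI herrk hgood
      obtain ⟨k', hkk, herrk', hup⟩ : ∃ k', k ≤ k' ∧ (∀ j ≥ n, |f (x j) - x (j + 1)| ≤ δ k') ∧
          ((∀ j ≥ n, |f (x j) - x (j + 1)| ≤ δ (k + 1)) → k' = k + 1) := by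
        by_cases hup : ∀ j ≥ n, |f (x j) - x (j + 1)| ≤ δ (k + 1)
        · exact ⟨k + 1, Nat.le_succ k, hup, fun _ => rfl⟩
        · exact ⟨k, le_rfl, herrk, fun h' => absurd h' hup⟩
      obtain ⟨m, hm, hgood'⟩ := htrack k' (θ k) (hθanti k k' hkk) (by linarith [hθle k])
        (by linarith [hθle k]) (f^[n] '' E) (fun i => x (n + i)) (fun i => hx _)
        (fun i => herrk' (n + i) (by omega)) hgood
      set E' : Set ℝ := {z | z ∈ E ∧ ∀ t, n < t → t ≤ n + m → |f^[t] z - x t| ≤ 10 * s * θ k'}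
        with hE'
      refine ⟨(n + m, k', E'), ⟨fun h0 => by omega, ?_, fun z hz => hEI hz.1,
        fun j hj => herrk' j (by simp only at hj; omega), ?_⟩, ?_, hkk, fun z hz => hz.1,
        fun z hz => hz.2, hup⟩
      · have : E' = E ∩ ⋂ t, ⋂ (_ : n < t ∧ t ≤ n + m),
            (E ∩ f^[t] ⁻¹' Metric.closedBall (x t) (10 * s * θ k')) := by
          ext z
          simp only [hE', Set.mem_ofPred_eq, Set.mem_inter_iff, Set.mem_iInter, Set.mem_preimage,
            Metric.mem_closedBall, Real.dist_eq]
          constructor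
          · rintro ⟨h1, h2⟩
            exact ⟨h1, fun t ht => ⟨h1, h2 t ht.1 ht.2⟩⟩
          · rintro ⟨h1, h2⟩
            exact ⟨h1, fun t ht1 ht2 => (h2 t ⟨ht1, ht2⟩).2⟩
        rw [this]
        exact hcl.inter (isClosed_iInter fun t => isClosed_iInter fun _ =>
          ((h.continuousOn_iterate t).mono hEI).preimage_isClosed_of_isClosed hcl
            Metric.isClosed_closedBall)
      · refine hgood'.mono ?_
        rintro w ⟨v, ⟨z, hz, rfl⟩, rfl, hclose⟩
        refine ⟨z, ⟨hz, fun t ht1 ht2 => ?_⟩, ?_⟩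
        · have := hclose (t - n) (by omega) (by omega)
          rw [← Function.iterate_add_apply] at this
          simpa only [Nat.sub_add_cancel ht1.le, Nat.add_sub_cancel' ht1.le] using this
        · rw [← Function.iterate_add_apply, Nat.add_comm]
      · simp only
        omega)
  have hn0 : (u 0).1 = 0 := ((hP 0).1 rfl).1
  have hnmono : StrictMono fun i => (u i).1 := strictMono_nat_of_lt_succ fun i => (hR i).1
  have hkmono : Monotone fun i => (u i).2.1 := monotone_nat_of_le_succ fun i => (hR i).2.1
  obtain ⟨z, hz⟩ := IsCompact.nonempty_iInter_of_sequence_nonempty_isCompact_isClosed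
    (fun i => (u i).2.2) (fun i => (hR i).2.2.1)
    (fun i => Set.image_nonempty.1 ((hP i).2.2.2.2.nonempty (by linarith) (hθpos _).le (hx _)))
    (isCompact_Icc.of_isClosed_subset (hP 0).2.1 (hP 0).2.2.1) (fun i => (hP i).2.1)
  rw [Set.mem_iInter] at hz
  have hblock : ∀ t, 1 ≤ t → ∃ i, (u i).1 < t ∧ t ≤ (u (i + 1)).1 := by
    classical
    intro t ht
    have hex : ∃ i, t ≤ (u i).1 := ⟨t, hnmono.id_le t⟩
    obtain ⟨i, hi⟩ : ∃ i, Nat.find hex = i + 1 := by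
      refine Nat.exists_eq_succ_of_ne_zero fun h0 => ?_
      have := Nat.find_spec hex
      rw [h0, hn0] at this
      omega
    refine ⟨i, ?_, hi ▸ Nat.find_spec hex⟩
    have := Nat.find_min hex (m := i) (by omega)
    omega
  refine ⟨z, (hP 0).2.2.1 (hz 0), ?_, ?_⟩
  · intro t
    rcases Nat.eq_zero_or_pos t with rfl | ht
    · exact ((hP 0).1 rfl).2 z (hz 0)
    · obtain ⟨i, h1, h2⟩ := hblock t ht
      have h3 := (hR i).2.2.2.1 z (hz (i + 1)) t h1 h2
      have h4 := mul_le_mul_of_nonneg_left (hθle (u (i + 1)).2.1) (by positivity : 0 ≤ 10 * s)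
      linarith
  · intro hlim η hη
    have hkunb : ∀ K, ∃ i, K ≤ (u i).2.1 := by
      intro K
      induction K with
      | zero => exact ⟨0, Nat.zero_le _⟩
      | succ K ih =>
        obtain ⟨i, hi⟩ := ih
        by_contra hno
        push Not at hno
        obtain ⟨N, hN⟩ := hlim (δ (K + 1)) (hδ _)
        have h1 : (u (max i N)).2.1 = K :=
          le_antisymm (Nat.lt_succ_iff.1 (hno _)) (hi.trans (hkmono (le_max_left i N)))
        have h2 := (hR (max i N)).2.2.2.2 (by
          intro j hj
          rw [h1]
          have h3 : max i N ≤ (u (max i N)).1 := hnmono.id_le _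
          exact hN j (by omega))
        have h3 := hno (max i N + 1)
        omega
    obtain ⟨K, hK⟩ : ∃ K, 10 * s * θ K ≤ η := by
      obtain ⟨K, hK⟩ := pow_unbounded_of_one_lt (10 * s * θ₀ / η) (one_lt_two (α := ℝ))
      refine ⟨K, ?_⟩
      rw [hθdef, ← mul_div_assoc, div_le_iff₀ (by positivity)]
      rw [div_lt_iff₀ hη] at hK
      linarith
    obtain ⟨i₀, hi₀⟩ := hkunb K
    refine ⟨(u i₀).1 + 1, fun t ht => ?_⟩
    obtain ⟨i, h1, h2⟩ := hblock t (by omega)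
    have h3 := (hR i).2.2.2.1 z (hz (i + 1)) t h1 h2
    have h4 : i₀ < i + 1 := hnmono.lt_iff_lt.1 (show (u i₀).1 < (u (i + 1)).1 by omega)
    have h5 := hθanti K (u (i + 1)).2.1 (hi₀.trans (hkmono h4.le))
    have h6 := mul_le_mul_of_nonneg_left h5 (by positivity : 0 ≤ 10 * s)
    linarith

/-- Accumulation of errors over `j` steps. -/
lemma PL.drift {f : ℝ → ℝ} {s : ℝ} {C : Set ℝ} (h : PL f s C) {x : ℕ → ℝ}
    (hx : ∀ n, x n ∈ Set.Icc (0 : ℝ) 1) {a B : ℝ} (ha : a ∈ Set.Icc (0 : ℝ) 1) (hB : 0 ≤ B) {N : ℕ}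
    (haN : |a - x N| ≤ B) (herr : ∀ n ≥ N, |f (x n) - x (n + 1)| ≤ B) (j : ℕ) :
    |f^[j] a - x (N + j)| ≤ (s + 1) ^ j * B := by
  have hspos := h.pos
  induction j with
  | zero => simpa using haN
  | succ j ih =>
    have h1 := h.lip (h.iter_mem j ha) (hx (N + j))
    have h2 := herr (N + j) (by omega)
    have h3 := abs_sub_le (f (f^[j] a)) (f (x (N + j))) (x (N + j + 1))
    have h4 : s * |f^[j] a - x (N + j)| ≤ s * ((s + 1) ^ j * B) :=
      mul_le_mul_of_nonneg_left ih hspos.le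
    have h5 : B ≤ (s + 1) ^ j * B :=
      le_mul_of_one_le_left hB (one_le_pow₀ (by linarith))
    rw [Function.iterate_succ_apply', ← Nat.add_assoc, pow_succ]
    linarith

/-- The linking property implies s-limit shadowing: an iterate of `f` with slope at least `8` inherits
linking, hence shadows, and shadowing passes back to `f` by Lipschitz continuity. -/
theorem slimit_of_linking {f : ℝ → ℝ} {s : ℝ} (h : PL f s (Crit f)) (hs : 1 < s)
    (hl : LinkingProperty f) : SLimitShadowingOn f (Set.Icc (0 : ℝ) 1) := by
  obtain ⟨n, hn⟩ := pow_unbounded_of_one_lt 8 hs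
  have hpow : 8 ≤ s ^ (n + 1) :=
    hn.le.trans (pow_le_pow_right₀ hs.le (Nat.le_succ n))
  set q := n + 1 with hq
  have hq0 : 0 < q := by omega
  set K := (s + 1) ^ q with hK
  have hKpos : 0 < K := by positivity
  have hKj : ∀ j ≤ q, ∀ B : ℝ, 0 ≤ B → (s + 1) ^ j * B ≤ K * B := fun j hj B hB =>
    mul_le_mul_of_nonneg_right (pow_le_pow_right₀ (by linarith) hj) hB
  have key : ∀ ε : ℝ, 0 < ε → ∃ δ : ℝ, 0 < δ ∧ ∀ x : ℕ → ℝ, (∀ n, x n ∈ Set.Icc (0 : ℝ) 1) →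
      (∀ n, dist (f (x n)) (x (n + 1)) < δ) →
      ∃ z ∈ Set.Icc (0 : ℝ) 1, (∀ n, dist (f^[n] z) (x n) < ε) ∧
        (Filter.Tendsto (fun n => dist (f (x n)) (x (n + 1))) Filter.atTop (nhds 0) →
          Filter.Tendsto (fun n => dist (f^[n] z) (x n)) Filter.atTop (nhds 0)) := by
    intro ε hε
    obtain ⟨δ, hδ, hsh⟩ := (h.iterate n).shadow_of_weakLinking hpow
      ((weakLinking_of_linking hl).iterate h hs.le n) (ε := ε / (2 * K)) (by positivity)
    refine ⟨min (δ / K) (ε / (2 * K)), lt_min (by positivity) (by positivity), ?_⟩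
    intro x hx herr
    simp only [Real.dist_eq] at herr ⊢
    have herr1 : ∀ n, |f (x n) - x (n + 1)| ≤ δ / K := fun n =>
      (herr n).le.trans (min_le_left _ _)
    have herr2 : ∀ n, |f (x n) - x (n + 1)| ≤ ε / (2 * K) := fun n =>
      (herr n).le.trans (min_le_right _ _)
    -- errors of the sampled pseudo-orbit for the iterate
    have hsample : ∀ B : ℝ, 0 ≤ B → ∀ i, (∀ n ≥ q * i, |f (x n) - x (n + 1)| ≤ B) →
        |f^[q] (x (q * i)) - x (q * (i + 1))| ≤ K * B := by
      intro B hB i hBi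
      have := h.drift hx (hx (q * i)) hB (by rw [sub_self, abs_zero]; exact hB) hBi q
      rwa [← Nat.mul_succ] at this
    obtain ⟨z, hz, hzε, hzlim⟩ := hsh (fun i => x (q * i)) (fun i => hx _) (fun i => by
      have := hsample (δ / K) (by positivity) i (fun n _ => herr1 n)
      rwa [mul_div_cancel₀ _ hKpos.ne'] at this)
    have hinter : ∀ B : ℝ, 0 ≤ B → ∀ t, |(f^[q])^[t / q] z - x (q * (t / q))| ≤ B →
        (∀ n ≥ q * (t / q), |f (x n) - x (n + 1)| ≤ B) → |f^[t] z - x t| ≤ K * B := by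
      intro B hB t h1 h2
      rw [← Function.iterate_mul] at h1
      have h3 := h.drift hx (h.iter_mem (q * (t / q)) hz) hB h1 h2 (t % q)
      rw [← Function.iterate_add_apply, Nat.add_comm (t % q), Nat.div_add_mod] at h3
      exact h3.trans (hKj _ (Nat.mod_lt _ hq0).le B hB)
    refine ⟨z, hz, ?_, ?_⟩
    · intro t
      have h1 := hinter (ε / (2 * K)) (by positivity) t (hzε _) (fun n _ => herr2 n)
      have h2 : K * (ε / (2 * K)) = ε / 2 := by field_simp
      linarith
    · intro hlim
      have hev : ∀ η : ℝ, 0 < η → ∃ N, ∀ n ≥ N, |f (x n) - x (n + 1)| ≤ η := by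
        intro η hη
        obtain ⟨N, hN⟩ := Metric.tendsto_atTop.1 hlim η hη
        refine ⟨N, fun n hn => ?_⟩
        have := hN n hn
        rw [Real.dist_eq, sub_zero, abs_abs] at this
        exact this.le
      have hzlim' := hzlim (by
        intro η hη
        obtain ⟨N, hN⟩ := hev (η / K) (by positivity)
        refine ⟨N, fun i hi => ?_⟩
        have := hsample (η / K) (by positivity) i (fun n hn => hN n (by nlinarith))
        rwa [mul_div_cancel₀ _ hKpos.ne'] at this)
      rw [Metric.tendsto_atTop]
      intro η hη
      obtain ⟨N₁, hN₁⟩ := hev (η / (2 * K)) (by positivity)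
      obtain ⟨N₂, hN₂⟩ := hzlim' (η / (2 * K)) (by positivity)
      refine ⟨q * max N₁ N₂, fun t ht => ?_⟩
      have h1 : max N₁ N₂ ≤ t / q := by
        rw [Nat.le_div_iff_mul_le hq0, Nat.mul_comm]
        exact ht
      have h2 := hinter (η / (2 * K)) (by positivity) t
        (hN₂ _ ((le_max_right _ _).trans h1))
        (fun n hn => hN₁ n (by
          have h3 : t / q ≤ q * (t / q) := Nat.le_mul_of_pos_left _ hq0
          have h4 := (le_max_left N₁ N₂).trans h1
          omega))
      have h3 : K * (η / (2 * K)) = η / 2 := by field_simp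
      rw [Real.dist_eq, sub_zero, abs_abs]
      linarith
  intro ε hε
  obtain ⟨δ, hδ, hkey⟩ := key ε hε
  refine ⟨δ, hδ, fun x hx herr => ?_, fun x hx herr hlim => ?_⟩
  · obtain ⟨z, hz, h1, -⟩ := hkey x hx herr
    exact ⟨z, hz, h1⟩
  · obtain ⟨z, hz, h1, h2⟩ := hkey x hx herr
    exact ⟨z, hz, h1, h2 hlim⟩

/-- For a continuous piecewise linear interval map with constant slope
`s > 1`, s-limit shadowing, shadowing and the linking property are all equivalent. -/
theorem slimit_iff_shadowing_iff_linking_of_pl_const_slope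
    (f : ℝ → ℝ) (s : ℝ) (hs : 1 < s)
    (hmaps : Set.MapsTo f (Set.Icc (0 : ℝ) 1) (Set.Icc (0 : ℝ) 1))
    (hcont : ContinuousOn f (Set.Icc (0 : ℝ) 1))
    (hpl : PiecewiseLinearConstSlope f s) :
    (SLimitShadowingOn f (Set.Icc (0 : ℝ) 1) ↔ ShadowingOn f (Set.Icc (0 : ℝ) 1)) ∧
    (ShadowingOn f (Set.Icc (0 : ℝ) 1) ↔ LinkingProperty f) := by
  have h := pl_of_constSlope f s hs hmaps hpl
  have h12 : SLimitShadowingOn f (Set.Icc (0 : ℝ) 1) → ShadowingOn f (Set.Icc (0 : ℝ) 1) := by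
    intro hsl ε hε
    obtain ⟨δ, hδ, hsh, -⟩ := hsl ε hε
    exact ⟨δ, hδ, hsh⟩
  have h23 := linking_of_shadowing h hs
  have h31 := slimit_of_linking h hs
  exact ⟨⟨h12, fun hsh => h31 (h23 hsh)⟩, ⟨h23, fun hl => h12 (h31 hl)⟩⟩
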